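/- arXiv:1305.5273 — 3 statements merged into one kernel-verified Lean document; each statement's English description precedes it below -/
import Mathlib

section
/- Let u be a λ-mode solution whose initial data (φ,ψ) are smooth and compactly supported in (2M,∞), and let τ̄₀ ∈ ℝ. Suppose g is a forward radiation field of u at null infinity with g(τ̄) = 0 for all τ̄ ≤ −τ̄₀, and g⁻ is a backward radiation field of u at null infinity with g⁻(τ̄) = 0 for all τ̄ ≥ τ̄₀. Then φ(r) = 0 and ψ(r) = 0 for every r ∈ (2M,∞) with r_*(r) > τ̄₀. (Support theorem at null infinity, Theorem 5.4, for a single spherical-harmonic mode.) -/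
/-!
In the tortoise coordinate `x = r_*` the rescaled mode `G = r u` solves the one-dimensional wave
equation `G_tt - G_xx + V(x) G = 0` (`regge_wheeler`), where `V` is bounded and `O(x⁻²)` as `x → ∞`
(`potential_bounds`). In the null coordinates `a = t - x`, `b = t + x` this reads
`∂_a ∂_b W = -(V / 4) W` (`CharSol`), and each uniqueness statement below follows by integrating this
identity and closing the estimate with a contraction factor `1 / 2`.

The radiation fields concern `P = ∂_t G`, which solves the same equation. By finite speed of
propagation (`CharSol.finite_speed`) `G` and `P` vanish for `a < -A`, `A < b`, where the data are
supported in `x ≤ A`. This makes the support theorem a characteristic problem with zero data. On a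
strip `-A - 1 ≤ a ≤ -τ₀` the function `P` vanishes on the left edge and tends to zero as `b → ∞`;
since the potential is integrable in `b` there, `P` vanishes for large `b` (`CharSol.strip`). Time
reversal gives the same near past null infinity. A finite null rectangle with corner far out now
carries zero data on two edges, so that `P = 0` on `a ≤ -τ₀`, `b ≥ τ₀` (`CharSol.goursat`,
`CharSol.vanish`).

Therefore `G` does not depend on `t` for `|t| ≤ x - τ₀`. It vanishes there when `x > A`, because the
data do, and a second use of the Goursat uniqueness, now for `G`, gives `G = 0` on the whole region,
in particular at `t = 0` (`wave_support`).
-/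

open MeasureTheory Filter Set Function
open scoped ContDiff

/-- The tortoise coordinate `r_* = r + 2M log(r - 2M)`. -/
noncomputable def rstar (M r : ℝ) : ℝ := r + 2*M*Real.log (r - 2*M)

/-- Partial derivative of `u` in the first (time) variable. -/
noncomputable def pdt (u : ℝ → ℝ → ℝ) (t r : ℝ) : ℝ := deriv (fun s => u s r) t

/-- Second partial derivative of `u` in the first (time) variable. -/
noncomputable def pdtt (u : ℝ → ℝ → ℝ) (t r : ℝ) : ℝ := deriv (fun s => pdt u s r) t

/-- Partial derivative of `u` in the second (radial) variable. -/
noncomputable def pdr (u : ℝ → ℝ → ℝ) (t r : ℝ) : ℝ := deriv (fun s => u t s) r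

/-- Second partial derivative of `u` in the second (radial) variable. -/
noncomputable def pdrr (u : ℝ → ℝ → ℝ) (t r : ℝ) : ℝ := deriv (fun s => pdr u t s) r

/-- `u(t,r)` is a λ-mode solution of the wave equation on the mass-`M`
Schwarzschild exterior: it is smooth on `ℝ × (2M,∞)` and satisfies
`−(r/(r−2M))·∂²ₜu + ((r−2M)/r)·∂²ᵣu + (2(r−M)/r²)·∂ᵣu − (λ²/r²)·u = 0` there. -/
def IsModeSolution (M lam : ℝ) (u : ℝ → ℝ → ℝ) : Prop :=
  ContDiffOn ℝ ∞ (Function.uncurry u) ((Set.univ : Set ℝ) ×ˢ Set.Ioi (2*M)) ∧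
  ∀ t r : ℝ, 2*M < r →
    -(r/(r-2*M)) * pdtt u t r + ((r-2*M)/r) * pdrr u t r
      + (2*(r-M)/r^2) * pdr u t r - lam^2/r^2 * u t r = 0

/-- `f` is a forward radiation field of `u` at the event horizon:
`∂ₜu(τ − r_*(r), r) → f(τ)` as `r → 2M⁺`. -/
def IsFwdRadHorizon (M : ℝ) (u : ℝ → ℝ → ℝ) (f : ℝ → ℝ) : Prop :=
  ∀ τ : ℝ, Filter.Tendsto (fun r => pdt u (τ - rstar M r) r)
    (nhdsWithin (2*M) (Set.Ioi (2*M))) (nhds (f τ))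

/-- `f` is a backward radiation field of `u` at the event horizon:
`∂ₜu(τ + r_*(r), r) → f(τ)` as `r → 2M⁺`. -/
def IsBwdRadHorizon (M : ℝ) (u : ℝ → ℝ → ℝ) (f : ℝ → ℝ) : Prop :=
  ∀ τ : ℝ, Filter.Tendsto (fun r => pdt u (τ + rstar M r) r)
    (nhdsWithin (2*M) (Set.Ioi (2*M))) (nhds (f τ))

/-- `g` is a forward radiation field of `u` at null infinity:
`r·∂ₜu(τ̄ + r_*(r), r) → g(τ̄)` as `r → ∞`. -/
def IsFwdRadInfty (M : ℝ) (u : ℝ → ℝ → ℝ) (g : ℝ → ℝ) : Prop :=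
  ∀ τ : ℝ, Filter.Tendsto (fun r => r * pdt u (τ + rstar M r) r)
    Filter.atTop (nhds (g τ))

/-- `g` is a backward radiation field of `u` at null infinity:
`r·∂ₜu(τ̄ − r_*(r), r) → g(τ̄)` as `r → ∞`. -/
def IsBwdRadInfty (M : ℝ) (u : ℝ → ℝ → ℝ) (g : ℝ → ℝ) : Prop :=
  ∀ τ : ℝ, Filter.Tendsto (fun r => r * pdt u (τ - rstar M r) r)
    Filter.atTop (nhds (g τ))

/-! ### Uniqueness for the characteristic equation -/

/-- Characteristic form `∂_a ∂_b W = -q(b - a) W` of a one-dimensional wave equation, in the null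
coordinates `a = t - x`, `b = t + x`; `Wa` and `Wb` are the two null derivatives of `W`. -/
structure CharSol (q : ℝ → ℝ) (W Wa Wb : ℝ → ℝ → ℝ) : Prop where
  cont : Continuous fun z : ℝ × ℝ => W z.1 z.2
  da : ∀ a b, HasDerivAt (fun a => W a b) (Wa a b) a
  db : ∀ a b, HasDerivAt (fun b => W a b) (Wb a b) b
  dab : ∀ a b, HasDerivAt (fun b => Wa a b) (-(q (b - a)) * W a b) b
  dba : ∀ a b, HasDerivAt (fun a => Wb a b) (-(q (b - a)) * W a b) a

/-- Time reversal `t ↦ -t` exchanges the null coordinates as `(a, b) ↦ (-b, -a)`. -/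
theorem CharSol.reflect {q : ℝ → ℝ} {W Wa Wb : ℝ → ℝ → ℝ} (h : CharSol q W Wa Wb) :
    CharSol q (fun a b => W (-b) (-a)) (fun a b => -Wb (-b) (-a)) (fun a b => -Wa (-b) (-a)) where
  cont := h.cont.comp (by fun_prop : Continuous fun z : ℝ × ℝ => (-z.2, -z.1))
  da a b := by
    simpa [Function.comp_def] using (h.db (-b) (-a)).comp a (hasDerivAt_neg a)
  db a b := by
    simpa [Function.comp_def] using (h.da (-b) (-a)).comp b (hasDerivAt_neg b)
  dab a b := by
    refine ((h.dba (-b) (-a)).comp b (hasDerivAt_neg b)).neg.congr_deriv ?_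
    rw [show -a - -b = b - a by ring]; ring
  dba a b := by
    refine ((h.dab (-b) (-a)).comp a (hasDerivAt_neg a)).neg.congr_deriv ?_
    rw [show -a - -b = b - a by ring]; ring

theorem abs_sub_le_of_deriv_le {f f' B B' : ℝ → ℝ} {x₀ x₁ : ℝ} (h : x₀ ≤ x₁)
    (hf : ∀ x ∈ Icc x₀ x₁, HasDerivAt f (f' x) x) (hB : ∀ x ∈ Icc x₀ x₁, HasDerivAt B (B' x) x)
    (hle : ∀ x ∈ Icc x₀ x₁, |f' x| ≤ B' x) : |f x₁ - f x₀| ≤ B x₁ - B x₀ := by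
  have key : ∀ g g' : ℝ → ℝ, (∀ x ∈ Icc x₀ x₁, HasDerivAt g (g' x) x) →
      (∀ x ∈ Icc x₀ x₁, 0 ≤ g' x) → g x₀ ≤ g x₁ := by
    intro g g' hg hg'
    refine (monotoneOn_of_deriv_nonneg (convex_Icc x₀ x₁)
      (fun x hx => (hg x hx).continuousAt.continuousWithinAt)
      (fun x hx => (hg x (interior_subset hx)).differentiableAt.differentiableWithinAt)
      (fun x hx => ?_)) (left_mem_Icc.2 h) (right_mem_Icc.2 h) h
    rw [(hg x (interior_subset hx)).deriv]
    exact hg' x (interior_subset hx)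
  have h1 := key (fun x => B x - f x) (fun x => B' x - f' x)
    (fun x hx => (hB x hx).sub (hf x hx)) (fun x hx => by linarith [(abs_le.1 (hle x hx)).2])
  have h2 := key (fun x => B x + f x) (fun x => B' x + f' x)
    (fun x hx => (hB x hx).add (hf x hx)) (fun x hx => by linarith [(abs_le.1 (hle x hx)).1])
  exact abs_le.2 ⟨by linarith, by linarith⟩

/-- The double integral of `∂_a ∂_b W` over a null rectangle is the alternating sum of the corner
values; hence a product bound on `∂_a ∂_b W` bounds that sum. -/
theorem CharSol.rect {q : ℝ → ℝ} {W Wa Wb : ℝ → ℝ → ℝ} (h : CharSol q W Wa Wb)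
    {α α' β β' : ℝ → ℝ} {a₀ a₁ b₀ b₁ : ℝ} (ha : a₀ ≤ a₁) (hb : b₀ ≤ b₁)
    (hα : ∀ x ∈ Icc a₀ a₁, HasDerivAt α (α' x) x) (hβ : ∀ x ∈ Icc b₀ b₁, HasDerivAt β (β' x) x)
    (hle : ∀ a ∈ Icc a₀ a₁, ∀ b ∈ Icc b₀ b₁, |q (b - a)| * |W a b| ≤ α' a * β' b) :
    |(W a₁ b₁ - W a₁ b₀) - (W a₀ b₁ - W a₀ b₀)| ≤ (α a₁ - α a₀) * (β b₁ - β b₀) := by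
  have h1 : ∀ a ∈ Icc a₀ a₁, |Wa a b₁ - Wa a b₀| ≤ α' a * (β b₁ - β b₀) := by
    intro a haa
    have := abs_sub_le_of_deriv_le (f := fun b => Wa a b) (B := fun b => α' a * β b) hb
      (fun b _ => h.dab a b) (fun b hbb => (hβ b hbb).const_mul (α' a))
      (fun b hbb => by rw [abs_mul, abs_neg]; exact hle a haa b hbb)
    simpa [mul_sub] using this
  have := abs_sub_le_of_deriv_le (f := fun a => W a b₁ - W a b₀)
    (B := fun a => α a * (β b₁ - β b₀)) ha
    (fun a _ => (h.da a b₁).sub (h.da a b₀)) (fun a haa => (hα a haa).mul_const _) h1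
  simpa [sub_mul] using this

/-- A continuous function on a compact set that is at most half of every common bound for it
vanishes: apply the hypothesis to its maximum. -/
theorem eq_zero_of_halving {S : Set (ℝ × ℝ)} (hS : IsCompact S) {F : ℝ × ℝ → ℝ}
    (hF : ContinuousOn F S)
    (hh : ∀ m : ℝ, 0 ≤ m → (∀ z ∈ S, |F z| ≤ m) → ∀ z ∈ S, |F z| ≤ m / 2) :
    ∀ z ∈ S, F z = 0 := by
  intro z hz
  obtain ⟨z₀, hz₀, hmax⟩ := hS.exists_isMaxOn ⟨z, hz⟩ hF.abs
  have h1 := hh |F z₀| (abs_nonneg _) (fun w hw => hmax hw) z₀ hz₀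
  have h2 : |F z| ≤ |F z₀| := hmax hz
  have h3 := abs_nonneg (F z₀)
  exact abs_eq_zero.1 (le_antisymm (by linarith) (abs_nonneg _))

theorem exists_weight {K : ℝ} (hK : 0 ≤ K) : ∃ k : ℝ, 0 < k ∧ K / (k * k) ≤ 1 / 2 := by
  refine ⟨2 * K + 1, by positivity, ?_⟩
  rw [div_le_iff₀ (by positivity)]
  nlinarith

theorem hasDerivAt_exp_weight {k : ℝ} (hk : k ≠ 0) (c x : ℝ) :
    HasDerivAt (fun x => Real.exp (k * (x + c)) / k) (Real.exp (k * (x + c))) x := by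
  refine ((((hasDerivAt_id' x).add_const c).const_mul k).exp.div_const k).congr_deriv ?_
  field_simp

/-- Uniqueness for the Goursat problem: zero data on the edges `a = a₀` and `b = b₁`. The maximum of
`|W|` against the weight `exp (k (a - b))` with `k` large is halved by the integral equation. -/
theorem CharSol.goursat {q : ℝ → ℝ} {W Wa Wb : ℝ → ℝ → ℝ} (h : CharSol q W Wa Wb) {K : ℝ}
    (hq : ∀ y, |q y| ≤ K) {a₀ a₁ b₀ b₁ : ℝ} (h1 : ∀ a ∈ Icc a₀ a₁, W a b₁ = 0)
    (h2 : ∀ b ∈ Icc b₀ b₁, W a₀ b = 0) :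
    ∀ a ∈ Icc a₀ a₁, ∀ b ∈ Icc b₀ b₁, W a b = 0 := by
  obtain ⟨k, hk, hkK⟩ := exists_weight (K := K) ((abs_nonneg _).trans (hq 0))
  have key := eq_zero_of_halving (S := Icc a₀ a₁ ×ˢ Icc b₀ b₁) (isCompact_Icc.prod isCompact_Icc)
    (F := fun z => W z.1 z.2 * Real.exp (-(k * (z.1 - z.2))))
    (by have := h.cont; fun_prop) ?_
  · intro a ha b hb
    have := key (a, b) ⟨ha, hb⟩
    simpa [Real.exp_ne_zero] using this
  · rintro m hm hbd ⟨a, b⟩ ⟨ha, hb⟩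
    have hbd' : ∀ a ∈ Icc a₀ a₁, ∀ b ∈ Icc b₀ b₁, |W a b| ≤ m * Real.exp (k * (a - b)) := by
      intro a ha b hb
      have := hbd (a, b) ⟨ha, hb⟩
      rw [abs_mul, Real.abs_exp, Real.exp_neg] at this
      rwa [← div_eq_mul_inv, div_le_iff₀ (Real.exp_pos _)] at this
    have hr := h.rect (α := fun x => K * m * (Real.exp (k * (x + 0)) / k))
      (α' := fun x => K * m * Real.exp (k * (x + 0)))
      (β := fun x => Real.exp (-k * (x + 0)) / (-k)) (β' := fun x => Real.exp (-k * (x + 0)))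
      ha.1 hb.2 (fun x _ => (hasDerivAt_exp_weight hk.ne' 0 x).const_mul _)
      (fun x _ => hasDerivAt_exp_weight (neg_ne_zero.2 hk.ne') 0 x)
      (fun x hx y hy => by
        have e1 := hbd' x ⟨hx.1, hx.2.trans ha.2⟩ y ⟨hb.1.trans hy.1, hy.2⟩
        have e2 : Real.exp (k * (x + 0)) * Real.exp (-k * (y + 0)) = Real.exp (k * (x - y)) := by
          rw [← Real.exp_add]; congr 1; ring
        calc |q (y - x)| * |W x y| ≤ K * (m * Real.exp (k * (x - y))) :=
              mul_le_mul (hq _) e1 (abs_nonneg _) ((abs_nonneg _).trans (hq 0))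
          _ = _ := by rw [← e2]; ring)
    rw [h1 a ha, h2 b hb, h1 a₀ ⟨le_rfl, ha.1.trans ha.2⟩] at hr
    simp only [zero_sub, sub_zero, abs_neg] at hr
    have hK : 0 ≤ K := (abs_nonneg _).trans (hq 0)
    have e3 : |W a b| ≤ (K / (k * k)) * m * Real.exp (k * (a - b)) := by
      refine hr.trans ?_
      have e2 : Real.exp (k * (a - b)) = Real.exp (k * (a + 0)) * Real.exp (-k * (b + 0)) := by
        rw [← Real.exp_add]; congr 1; ring
      have p1 := Real.exp_pos (k * (a + 0))
      have p2 := Real.exp_pos (-k * (b + 0))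
      have p3 := Real.exp_pos (k * (a₀ + 0))
      have p4 := Real.exp_pos (-k * (b₁ + 0))
      rw [e2]
      calc _ = K * m / (k * k) * ((Real.exp (k * (a + 0)) - Real.exp (k * (a₀ + 0))) *
            (Real.exp (-k * (b + 0)) - Real.exp (-k * (b₁ + 0)))) := by field_simp; ring
        _ ≤ K * m / (k * k) * (Real.exp (k * (a + 0)) * Real.exp (-k * (b + 0))) := by
            gcongr ?_ * ?_
            refine mul_le_mul (by linarith) (by linarith) ?_ p1.le
            rw [sub_nonneg]; apply Real.exp_le_exp.2; nlinarith [hb.2]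
        _ = _ := by ring
    rw [abs_mul, Real.abs_exp, Real.exp_neg, ← div_eq_mul_inv, div_le_iff₀ (Real.exp_pos _)]
    refine e3.trans ?_
    have := Real.exp_pos (k * (a - b))
    gcongr ?_ * _
    nlinarith

/-- Finite speed of propagation: if the Cauchy data on `t = 0`, that is on `a + b = 0`, vanish for
`x > A`, then the solution vanishes in the future domain of dependence. -/
theorem CharSol.cauchy {q : ℝ → ℝ} {W Wa Wb : ℝ → ℝ → ℝ} (h : CharSol q W Wa Wb) {K : ℝ}
    (hq : ∀ y, |q y| ≤ K) {A : ℝ} (h1 : ∀ x, A < x → W (-x) x = 0)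
    (h2 : ∀ x, A < x → Wa (-x) x = 0) {a b : ℝ} (hab : 0 ≤ a + b) (haA : a < -A) :
    W a b = 0 := by
  have hK : 0 ≤ K := (abs_nonneg _).trans (hq 0)
  obtain ⟨k, hk, hkK⟩ := exists_weight hK
  set S : Set (ℝ × ℝ) := (Icc (-b) a ×ˢ Icc (-a) b) ∩ {z | 0 ≤ z.1 + z.2} with hSdef
  have hS : IsCompact S := (isCompact_Icc.prod isCompact_Icc).inter_right
    (isClosed_le continuous_const (by fun_prop))
  have key := eq_zero_of_halving hS
    (F := fun z => W z.1 z.2 * Real.exp (-(k * (z.1 + z.2))))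
    (by have := h.cont; fun_prop) ?_
  · have := key (a, b) ⟨⟨⟨by linarith, le_rfl⟩, ⟨by linarith, le_rfl⟩⟩, hab⟩
    simpa [Real.exp_ne_zero] using this
  · rintro m hm hbd ⟨a', b'⟩ ⟨⟨⟨hz1, hz2⟩, ⟨hz3, hz4⟩⟩, hz5⟩
    simp only [mem_ofPred_eq] at hz1 hz2 hz3 hz4 hz5
    have hbd' : ∀ x y, x ≤ a → y ≤ b → 0 ≤ x + y → |W x y| ≤ m * Real.exp (k * (y + x)) := by
      intro x y hx hy hxy
      have := hbd (x, y) ⟨⟨⟨by linarith, hx⟩, ⟨by linarith, hy⟩⟩, hxy⟩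
      rw [abs_mul, Real.abs_exp, Real.exp_neg] at this
      rw [← div_eq_mul_inv, div_le_iff₀ (Real.exp_pos _)] at this
      rwa [add_comm y x]
    have e1 : ∀ x, -b' ≤ x → x ≤ a' → |Wa x b'| ≤ K * m / k * Real.exp (k * (x + b')) := by
      intro x hx1 hx2
      have := abs_sub_le_of_deriv_le (f := fun y => Wa x y)
        (B := fun y => K * m * (Real.exp (k * (y + x)) / k)) (x₀ := -x) (x₁ := b') (by linarith)
        (fun y _ => h.dab x y)
        (fun y _ => (hasDerivAt_exp_weight hk.ne' x y).const_mul _)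
        (fun y hy => by
          rw [abs_mul, abs_neg, mul_assoc]
          exact mul_le_mul (hq _) (hbd' x y (by linarith) (by linarith [hy.2]) (by linarith [hy.1]))
            (abs_nonneg _) hK)
      have e0 : Wa x (-x) = 0 := by simpa using h2 (-x) (by linarith)
      simp only [e0, sub_zero] at this
      refine this.trans ?_
      have p := Real.exp_pos (k * (-x + x))
      rw [add_comm x b']
      have : 0 ≤ K * m * (Real.exp (k * (-x + x)) / k) := by positivity
      calc _ ≤ K * m * (Real.exp (k * (b' + x)) / k) := by linarith
        _ = _ := by ring
    have := abs_sub_le_of_deriv_le (f := fun x => W x b')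
        (B := fun x => K * m / k * (Real.exp (k * (x + b')) / k)) (x₀ := -b') (x₁ := a')
        (by linarith) (fun x _ => h.da x b')
        (fun x _ => (hasDerivAt_exp_weight hk.ne' b' x).const_mul _)
        (fun x hx => e1 x hx.1 hx.2)
    have e0 : W (-b') b' = 0 := h1 b' (by linarith)
    simp only [e0, sub_zero] at this
    rw [abs_mul, Real.abs_exp, Real.exp_neg, ← div_eq_mul_inv, div_le_iff₀ (Real.exp_pos _)]
    refine this.trans ?_
    have p := Real.exp_pos (k * (a' + b'))
    have : 0 ≤ K * m / k * (Real.exp (k * (-b' + b')) / k) := by positivity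
    calc _ ≤ K * m / k * (Real.exp (k * (a' + b')) / k) := by linarith
      _ = (K / (k * k)) * m * Real.exp (k * (a' + b')) := by field_simp
      _ ≤ _ := by gcongr ?_ * _; nlinarith

/-- Both time directions of finite speed of propagation: data vanishing for `x > A` give a solution
vanishing for `x - |t| > A`. -/
theorem CharSol.finite_speed {q : ℝ → ℝ} {W Wa Wb : ℝ → ℝ → ℝ} (h : CharSol q W Wa Wb) {K : ℝ}
    (hq : ∀ y, |q y| ≤ K) {A : ℝ} (h1 : ∀ x, A < x → W (-x) x = 0)
    (h2 : ∀ x, A < x → Wa (-x) x = 0) (h3 : ∀ x, A < x → Wb (-x) x = 0)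
    {a b : ℝ} (ha : a < -A) (hb : A < b) : W a b = 0 := by
  rcases le_total 0 (a + b) with hab | hab
  · exact h.cauchy hq h1 h2 hab ha
  · have := h.reflect.cauchy hq (A := A) (fun x hx => by simpa using h1 x hx)
      (fun x hx => by simpa using h3 x hx) (a := -b) (b := -a) (by linarith) (by linarith)
    simpa using this

/-- Uniqueness from null infinity: if the potential decays like `y⁻²` and the solution vanishes on
`a = a₀` and tends to zero as `b → ∞` on each line `a = const` of the strip, then it vanishes in the
strip near null infinity. Far out the potential has integral at most `1 / 2` over the strip, so that
the solution is bounded, and each bound for it can be halved. -/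
theorem CharSol.strip {q : ℝ → ℝ} {W Wa Wb : ℝ → ℝ → ℝ} (h : CharSol q W Wa Wb) {K : ℝ}
    (hK : 0 ≤ K) (hq : ∀ y, 0 < y → |q y| ≤ K / y ^ 2) {a₀ a₁ B₀ : ℝ}
    (h1 : ∀ b, B₀ ≤ b → W a₀ b = 0)
    (h2 : ∀ a ∈ Icc a₀ a₁, Tendsto (fun b => W a b) atTop (nhds 0)) :
    ∃ w₀, ∀ b, w₀ ≤ b → ∀ a ∈ Icc a₀ a₁, W a b = 0 := by
  rcases lt_or_ge a₁ a₀ with hlt | ha01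
  · exact ⟨0, fun b _ a ha => absurd (ha.1.trans ha.2) (not_le.2 hlt)⟩
  set w₀ : ℝ := max B₀ (a₁ + 1 + 2 * (K * (a₁ - a₀))) with hw₀
  have hwB : B₀ ≤ w₀ := le_max_left _ _
  have hKa : 0 ≤ K * (a₁ - a₀) := mul_nonneg hK (by linarith)
  have hwa : a₁ + 1 + 2 * (K * (a₁ - a₀)) ≤ w₀ := le_max_right _ _
  have hd : 0 < w₀ - a₁ := by linarith
  -- A bound `m` for `|W|` on part of the strip bounds the variation of `W` along `a = const`.
  have var : ∀ m, 0 ≤ m → ∀ b b', w₀ ≤ b → b ≤ b' → ∀ a ∈ Icc a₀ a₁,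
      (∀ x ∈ Icc a₀ a₁, ∀ y ∈ Icc b b', |W x y| ≤ m) → |W a b' - W a b| ≤ m / 2 := by
    intro m hm b b' hb hbb a ha hbd
    have hr := h.rect (α := fun x => m * x) (α' := fun _ => m)
      (β := fun y => -K / (y - a₁)) (β' := fun y => K / (y - a₁) ^ 2) ha.1 hbb
      (fun x _ => by simpa using (hasDerivAt_id x).const_mul m)
      (fun y hy => by
        have hy0 : y - a₁ ≠ 0 := by linarith [hy.1]
        exact ((hasDerivAt_const y (-K)).div ((hasDerivAt_id' y).sub_const a₁) hy0).congr_deriv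
          (by simp))
      (fun x hx y hy => by
        have hy1 : 0 < y - a₁ := by linarith [hy.1]
        have hx1 : y - a₁ ≤ y - x := by linarith [hx.2, ha.2]
        have e1 : |q (y - x)| ≤ K / (y - a₁) ^ 2 := (hq _ (by linarith)).trans (by gcongr)
        rw [mul_comm m]
        exact mul_le_mul e1 (hbd x ⟨hx.1, hx.2.trans ha.2⟩ y hy) (abs_nonneg _) (by positivity))
    rw [h1 b (hwB.trans hb), h1 b' (hwB.trans (hb.trans hbb)), sub_zero, sub_zero] at hr
    refine hr.trans ?_
    have e1 : 0 ≤ K / (b' - a₁) := div_nonneg hK (by linarith)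
    have e2 : K / (b - a₁) ≤ K / (w₀ - a₁) := by gcongr
    have e3 : -K / (b' - a₁) - -K / (b - a₁) ≤ K / (w₀ - a₁) := by
      rw [neg_div, neg_div]; linarith
    have e4 : m * a - m * a₀ ≤ m * (a₁ - a₀) := by
      nlinarith [ha.2]
    calc _ ≤ m * (a₁ - a₀) * (K / (w₀ - a₁)) := by
          refine (mul_le_mul_of_nonneg_left e3 ?_).trans (mul_le_mul_of_nonneg_right e4 (by positivity))
          nlinarith [ha.1]
      _ = m * (K * (a₁ - a₀) / (w₀ - a₁)) := by ring
      _ ≤ m * (1 / 2) := by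
          refine mul_le_mul_of_nonneg_left ?_ hm
          rw [div_le_iff₀ hd]; linarith
      _ = m / 2 := by ring
  obtain ⟨a', ha', hmax⟩ := (isCompact_Icc (a := a₀) (b := a₁)).exists_isMaxOn ⟨a₀, ⟨le_rfl, ha01⟩⟩
    (f := fun a => |W a w₀|)
    (h.cont.comp (by fun_prop : Continuous fun a : ℝ => (a, w₀))).abs.continuousOn
  set C := |W a' w₀| with hC
  have hC0 : 0 ≤ C := abs_nonneg _
  have bdd : ∀ b, w₀ ≤ b → ∀ a ∈ Icc a₀ a₁, |W a b| ≤ 2 * C := by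
    intro b hb a ha
    obtain ⟨z, hz, hzmax⟩ := (isCompact_Icc.prod isCompact_Icc :
      IsCompact (Icc a₀ a₁ ×ˢ Icc w₀ b)).exists_isMaxOn ⟨(a, b), ⟨ha, ⟨hb, le_rfl⟩⟩⟩
      h.cont.abs.continuousOn
    have e1 := var |W z.1 z.2| (abs_nonneg _) w₀ z.2 le_rfl hz.2.1 z.1 hz.1
      (fun x hx y hy => hzmax (a := (x, y)) ⟨hx, ⟨hy.1, hy.2.trans hz.2.2⟩⟩)
    have e2 : |W z.1 w₀| ≤ C := hmax hz.1
    have e3 : |W a b| ≤ |W z.1 z.2| := hzmax (a := (a, b)) ⟨ha, ⟨hb, le_rfl⟩⟩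
    have e4 := abs_sub_abs_le_abs_sub (W z.1 z.2) (W z.1 w₀)
    linarith
  have halve : ∀ n : ℕ, ∀ b, w₀ ≤ b → ∀ a ∈ Icc a₀ a₁, |W a b| ≤ 2 * C * (1 / 2) ^ n := by
    intro n
    induction n with
    | zero => simpa using bdd
    | succ n ih =>
      intro b hb a ha
      have lim : Tendsto (fun b' => |W a b' - W a b|) atTop (nhds |0 - W a b|) :=
        ((h2 a ha).sub_const _).abs
      have := le_of_tendsto lim (eventually_ge_atTop b |>.mono fun b' hb' =>
        var (2 * C * (1 / 2) ^ n) (by positivity) b b' hb hb' a ha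
          (fun x hx y hy => ih y (hb.trans hy.1) x hx))
      rw [zero_sub, abs_neg] at this
      rw [pow_succ]
      linarith
  refine ⟨w₀, fun b hb a ha => abs_eq_zero.1 (le_antisymm ?_ (abs_nonneg _))⟩
  have lim : Tendsto (fun n : ℕ => 2 * C * (1 / 2 : ℝ) ^ n) atTop (nhds (2 * C * 0)) :=
    (tendsto_pow_atTop_nhds_zero_of_lt_one (by norm_num) (by norm_num)).const_mul _
  rw [mul_zero] at lim
  exact ge_of_tendsto' lim fun n => halve n b hb a ha

/-- A characteristic solution that vanishes near spatial infinity (`x - |t| > A`) and tends to zero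
at future null infinity for `a ≤ -τ₀` and at past null infinity for `b ≥ τ₀` vanishes for
`|t| ≤ x - τ₀`. -/
theorem CharSol.vanish {q : ℝ → ℝ} {W Wa Wb : ℝ → ℝ → ℝ} (h : CharSol q W Wa Wb) {K K' : ℝ}
    (hK : 0 ≤ K) (hq : ∀ y, 0 < y → |q y| ≤ K / y ^ 2) (hq' : ∀ y, |q y| ≤ K') {A τ₀ : ℝ}
    (hA : ∀ a b, a < -A → A < b → W a b = 0)
    (hf : ∀ a, a ≤ -τ₀ → Tendsto (fun b => W a b) atTop (nhds 0))
    (hp : ∀ b, τ₀ ≤ b → Tendsto (fun a => W (-a) b) atTop (nhds 0)) :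
    ∀ a b, a ≤ -τ₀ → τ₀ ≤ b → W a b = 0 := by
  intro a b ha hb
  obtain ⟨w₁, hw₁⟩ := h.strip hK hq (a₀ := -(A + 1)) (a₁ := -τ₀) (B₀ := A + 1)
    (fun b hb => hA _ _ (by linarith) (by linarith)) (fun a ha => hf a ha.2)
  obtain ⟨w₂, hw₂⟩ := h.reflect.strip hK hq (a₀ := -(A + 1)) (a₁ := -τ₀) (B₀ := A + 1)
    (fun b hb => hA _ _ (by linarith) (by linarith)) (fun a ha => hp (-a) (by linarith [ha.2]))
  -- The corner `(-w, w)` of the rectangle lies beyond both strips and beyond the given point.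
  obtain ⟨w, hwa, hwb, hwA, hw1, hw2⟩ : ∃ w, -a ≤ w ∧ b ≤ w ∧ A + 1 ≤ w ∧ w₁ ≤ w ∧ w₂ ≤ w :=
    ⟨max (-a) (max b (max (A + 1) (max w₁ w₂))), by simp, by simp, by simp, by simp, by simp⟩
  refine h.goursat hq' (a₀ := -w) (a₁ := -τ₀) (b₀ := τ₀) (b₁ := w) ?_ ?_ a
    ⟨by linarith, ha⟩ b ⟨hb, hwb⟩
  · intro x hx
    rcases lt_or_ge x (-(A + 1)) with hlt | hge
    · exact hA _ _ (by linarith) (by linarith)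
    · exact hw₁ w hw1 x ⟨hge, hx.2⟩
  · intro y hy
    rcases lt_or_ge (-y) (-(A + 1)) with hlt | hge
    · exact hA _ _ (by linarith) (by linarith)
    · simpa using hw₂ w hw2 (-y) ⟨hge, by linarith [hy.1]⟩

/-! ### Smooth wave equations on the line in null coordinates -/

theorem contDiff_pdt {G : ℝ → ℝ → ℝ} (h : ContDiff ℝ ∞ (uncurry G)) :
    ContDiff ℝ ∞ (uncurry (pdt G)) ∧
      ∀ t x, pdt G t x = fderiv ℝ (uncurry G) (t, x) (1, 0) := by
  have e : ∀ t x, pdt G t x = fderiv ℝ (uncurry G) (t, x) (1, 0) := fun t x =>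
    (((h.differentiable (by simp)) (t, x)).hasFDerivAt.comp_hasDerivAt (f := fun s => (s, x)) t
      ((hasDerivAt_id' t).prodMk (hasDerivAt_const t x))).deriv
  refine ⟨?_, e⟩
  have : uncurry (pdt G) = fun z => fderiv ℝ (uncurry G) z (1, 0) := by
    ext ⟨t, x⟩; exact e t x
  rw [this]
  exact (h.fderiv_right (m := ∞) (by simp)).clm_apply contDiff_const

theorem contDiff_pdr {G : ℝ → ℝ → ℝ} (h : ContDiff ℝ ∞ (uncurry G)) :
    ContDiff ℝ ∞ (uncurry (pdr G)) ∧
      ∀ t x, pdr G t x = fderiv ℝ (uncurry G) (t, x) (0, 1) := by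
  have e : ∀ t x, pdr G t x = fderiv ℝ (uncurry G) (t, x) (0, 1) := fun t x =>
    (((h.differentiable (by simp)) (t, x)).hasFDerivAt.comp_hasDerivAt (f := fun s => (t, s)) x
      ((hasDerivAt_const x t).prodMk (hasDerivAt_id' x))).deriv
  refine ⟨?_, e⟩
  have : uncurry (pdr G) = fun z => fderiv ℝ (uncurry G) z (0, 1) := by
    ext ⟨t, x⟩; exact e t x
  rw [this]
  exact (h.fderiv_right (m := ∞) (by simp)).clm_apply contDiff_const

theorem pdt_pdr_comm {G : ℝ → ℝ → ℝ} (h : ContDiff ℝ ∞ (uncurry G)) :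
    pdt (pdr G) = pdr (pdt G) := by
  have e1 : uncurry (pdt G) = fun z => fderiv ℝ (uncurry G) z (1, 0) := by
    ext ⟨t, x⟩; exact (contDiff_pdt h).2 t x
  have e2 : uncurry (pdr G) = fun z => fderiv ℝ (uncurry G) z (0, 1) := by
    ext ⟨t, x⟩; exact (contDiff_pdr h).2 t x
  have hd : Differentiable ℝ (fderiv ℝ (uncurry G)) :=
    (h.fderiv_right (m := ∞) (by simp)).differentiable (by simp)
  ext t x
  rw [(contDiff_pdt (contDiff_pdr h).1).2, (contDiff_pdr (contDiff_pdt h).1).2, e1, e2,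
    fderiv_clm_apply (hd _) (by fun_prop), fderiv_clm_apply (hd _) (by fun_prop)]
  simpa using second_derivative_symmetric (fun y => (h.differentiable (by simp) y).hasFDerivAt)
    (hd (t, x)).hasFDerivAt (1, 0) (0, 1)

theorem hasDerivAt_pdt {G : ℝ → ℝ → ℝ} (h : ContDiff ℝ ∞ (uncurry G)) (t x : ℝ) :
    HasDerivAt (fun t => G t x) (pdt G t x) t := by
  have : DifferentiableAt ℝ (fun t => uncurry G (t, x)) t :=
    DifferentiableAt.comp (f := fun s => (s, x)) t ((h.differentiable (by simp)) (t, x))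
      (by fun_prop)
  exact this.hasDerivAt

theorem hasDerivAt_null_a {G : ℝ → ℝ → ℝ} (h : ContDiff ℝ ∞ (uncurry G)) (a b : ℝ) :
    HasDerivAt (fun a => G ((a + b) / 2) ((b - a) / 2))
      ((pdt G ((a + b) / 2) ((b - a) / 2) - pdr G ((a + b) / 2) ((b - a) / 2)) / 2) a := by
  have := ((h.differentiable (by simp)) ((a + b) / 2, (b - a) / 2)).hasFDerivAt.comp_hasDerivAt a
      ((((hasDerivAt_id' a).add_const b).div_const 2).prodMk
        (((hasDerivAt_id' a).const_sub b).div_const 2))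
  refine this.congr_deriv ?_
  rw [(contDiff_pdt h).2, (contDiff_pdr h).2,
    show ((1 / 2, -1 / 2) : ℝ × ℝ) = (1 / 2 : ℝ) • (1, 0) - (1 / 2 : ℝ) • (0, 1) by
      ext <;> simp; norm_num, map_sub, map_smul, map_smul]
  simp only [smul_eq_mul]; ring

theorem hasDerivAt_null_b {G : ℝ → ℝ → ℝ} (h : ContDiff ℝ ∞ (uncurry G)) (a b : ℝ) :
    HasDerivAt (fun b => G ((a + b) / 2) ((b - a) / 2))
      ((pdt G ((a + b) / 2) ((b - a) / 2) + pdr G ((a + b) / 2) ((b - a) / 2)) / 2) b := by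
  have := ((h.differentiable (by simp)) ((a + b) / 2, (b - a) / 2)).hasFDerivAt.comp_hasDerivAt b
      ((((hasDerivAt_id' b).const_add a).div_const 2).prodMk
        (((hasDerivAt_id' b).sub_const a).div_const 2))
  refine this.congr_deriv ?_
  rw [(contDiff_pdt h).2, (contDiff_pdr h).2,
    show ((1 / 2, 1 / 2) : ℝ × ℝ) = (1 / 2 : ℝ) • (1, 0) + (1 / 2 : ℝ) • (0, 1) by
      ext <;> simp, map_add, map_smul, map_smul]
  simp only [smul_eq_mul]; ring

/-- A smooth solution of `G_tt - G_xx + V(x) G = 0`, written in null coordinates; the factor `1 / 4`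
in the potential comes from `∂_a ∂_b = (∂_t² - ∂_x²) / 4`, and `x = (b - a) / 2`. -/
theorem charSol_of_wave {V : ℝ → ℝ} {G : ℝ → ℝ → ℝ} (h : ContDiff ℝ ∞ (uncurry G))
    (hw : ∀ t x, pdt (pdt G) t x - pdr (pdr G) t x = -V x * G t x) :
    CharSol (fun y => V (y / 2) / 4) (fun a b => G ((a + b) / 2) ((b - a) / 2))
      (fun a b => (pdt G ((a + b) / 2) ((b - a) / 2) - pdr G ((a + b) / 2) ((b - a) / 2)) / 2)
      (fun a b => (pdt G ((a + b) / 2) ((b - a) / 2) + pdr G ((a + b) / 2) ((b - a) / 2)) / 2) where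
  cont := h.continuous.comp
    (by fun_prop : Continuous fun z : ℝ × ℝ => ((z.1 + z.2) / 2, (z.2 - z.1) / 2))
  da := hasDerivAt_null_a h
  db := hasDerivAt_null_b h
  dab a b := by
    refine (((hasDerivAt_null_b (contDiff_pdt h).1 a b).sub
      (hasDerivAt_null_b (contDiff_pdr h).1 a b)).div_const 2).congr_deriv ?_
    rw [pdt_pdr_comm h]
    linear_combination (1 / 4) * hw ((a + b) / 2) ((b - a) / 2)
  dba a b := by
    refine (((hasDerivAt_null_a (contDiff_pdt h).1 a b).add
      (hasDerivAt_null_a (contDiff_pdr h).1 a b)).div_const 2).congr_deriv ?_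
    rw [pdt_pdr_comm h]
    linear_combination (1 / 4) * hw ((a + b) / 2) ((b - a) / 2)

theorem wave_pdt {V : ℝ → ℝ} {G : ℝ → ℝ → ℝ} (h : ContDiff ℝ ∞ (uncurry G))
    (hw : ∀ t x, pdt (pdt G) t x - pdr (pdr G) t x = -V x * G t x) :
    ∀ t x, pdt (pdt (pdt G)) t x - pdr (pdr (pdt G)) t x = -V x * pdt G t x := by
  intro t x
  rw [← pdt_pdr_comm h, ← pdt_pdr_comm (contDiff_pdr h).1]
  have h1 := (hasDerivAt_pdt (contDiff_pdt (contDiff_pdt h).1).1 t x).sub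
    (hasDerivAt_pdt (contDiff_pdr (contDiff_pdr h).1).1 t x)
  have h2 := (hasDerivAt_pdt h t x).const_mul (-V x)
  refine h1.unique (h2.congr_of_eventuallyEq (Eventually.of_forall fun s => hw s x))

/-- The support theorem for `G_tt - G_xx + V(x) G = 0` on the line: it combines uniqueness from null
infinity for `∂_t G` with Goursat uniqueness for `G`, which is then independent of `t` on
`|t| ≤ x - τ₀` and zero for large `x`. -/
theorem wave_support {V : ℝ → ℝ} {G : ℝ → ℝ → ℝ} (h : ContDiff ℝ ∞ (uncurry G))
    (hw : ∀ t x, pdt (pdt G) t x - pdr (pdr G) t x = -V x * G t x) {K K' : ℝ} (hK : 0 ≤ K)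
    (hV : ∀ x, 0 < x → |V x| ≤ K / x ^ 2) (hV' : ∀ x, |V x| ≤ K') {A τ₀ : ℝ}
    (h0 : ∀ x, A < x → G 0 x = 0) (h0' : ∀ x, A < x → pdt G 0 x = 0)
    (hf : ∀ τ, τ ≤ -τ₀ → Tendsto (fun x => pdt G (τ + x) x) atTop (nhds 0))
    (hp : ∀ τ, τ₀ ≤ τ → Tendsto (fun x => pdt G (τ - x) x) atTop (nhds 0)) :
    ∀ x, τ₀ < x → G 0 x = 0 ∧ pdt G 0 x = 0 := by
  have hG := charSol_of_wave h hw
  have hP := charSol_of_wave (contDiff_pdt h).1 (wave_pdt h hw)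
  have hq : ∀ y : ℝ, 0 < y → |V (y / 2) / 4| ≤ K / y ^ 2 := by
    intro y hy
    have := hV (y / 2) (by positivity)
    rw [abs_div, abs_of_pos (by norm_num : (0 : ℝ) < 4), div_le_iff₀ (by norm_num)]
    refine this.trans (le_of_eq ?_)
    field_simp
    norm_num
  have hq' : ∀ y : ℝ, |V (y / 2) / 4| ≤ K' := by
    intro y
    rw [abs_div, abs_of_pos (by norm_num : (0 : ℝ) < 4)]
    have := hV' (y / 2)
    have := abs_nonneg (V (y / 2))
    linarith
  -- The spatial derivative of the vanishing data also vanishes.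
  have h0'' : ∀ x, A < x → pdr G 0 x = 0 := by
    intro x hx
    have : (fun s => G 0 s) =ᶠ[nhds x] fun _ => 0 := by
      filter_upwards [Ioi_mem_nhds hx] with s hs using h0 s hs
    rw [pdr, this.deriv_eq, deriv_const]
  have hGA : ∀ a b, a < -A → A < b → G ((a + b) / 2) ((b - a) / 2) = 0 := by
    intro a b ha hb
    refine hG.finite_speed hq' (A := A) ?_ ?_ ?_ ha hb <;> intro x hx <;>
      simp [h0 x hx, h0' x hx, h0'' x hx]
  have hGA' : ∀ t x, A < x - t → A < x + t → G t x = 0 := by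
    intro t x h1 h2
    have := hGA (t - x) (t + x) (by linarith) (by linarith)
    rwa [show (t - x + (t + x)) / 2 = t by ring, show (t + x - (t - x)) / 2 = x by ring] at this
  have hPA : ∀ t x, A < x - t → A < x + t → pdt G t x = 0 := by
    intro t x h1 h2
    have : (fun s => G s x) =ᶠ[nhds t] fun _ => 0 := by
      filter_upwards [Ioo_mem_nhds (show A - x < t by linarith) (show t < x - A by linarith)]
        with s hs using hGA' s x (by linarith [hs.2]) (by linarith [hs.1])
    rw [pdt, this.deriv_eq, deriv_const]
  have hPv := hP.vanish hK hq hq' (A := A) (τ₀ := τ₀)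
    (fun a b ha hb => hPA _ _ (by linarith) (by linarith))
    (fun a ha => by
      refine ((hf a ha).comp (tendsto_id.atTop_add (tendsto_const_nhds (x := -a))
        |>.atTop_div_const (show (0 : ℝ) < 2 by norm_num))).congr fun b => ?_
      simp only [comp_apply, id]
      ring_nf)
    (fun b hb => by
      refine ((hp b hb).comp (tendsto_id.atTop_add (tendsto_const_nhds (x := b))
        |>.atTop_div_const (show (0 : ℝ) < 2 by norm_num))).congr fun a => ?_
      simp only [comp_apply, id]
      ring_nf)
  have hP0 : ∀ t x, t - x ≤ -τ₀ → τ₀ ≤ t + x → pdt G t x = 0 := by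
    intro t x h1 h2
    have := hPv (t - x) (t + x) h1 h2
    rwa [show (t - x + (t + x)) / 2 = t by ring, show (t + x - (t - x)) / 2 = x by ring] at this
  have hstat : ∀ t x, A < x → t - x ≤ -τ₀ → τ₀ ≤ t + x → G t x = 0 := by
    intro t x hx h1 h2
    have key := constant_of_has_deriv_right_zero (f := fun s => G s x) (a := -|t|) (b := |t|)
      (fun s _ => (hasDerivAt_pdt h s x).continuousAt.continuousWithinAt)
      (fun s hs => by
        have hz : pdt G s x = 0 := by
          rcases abs_cases t with ⟨e, _⟩ | ⟨e, _⟩ <;>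
            (rw [e] at hs; exact hP0 s x (by linarith [hs.1, hs.2]) (by linarith [hs.1, hs.2]))
        exact hz ▸ (hasDerivAt_pdt h s x).hasDerivWithinAt)
    have e1 := key t ⟨neg_abs_le t, le_abs_self t⟩
    have e2 := key 0 ⟨by simp, by simp⟩
    rw [e1, ← e2, h0 x hx]
  intro x hx
  refine ⟨?_, hP0 0 x (by linarith) (by linarith)⟩
  obtain ⟨w, hw1, hw2, hw3⟩ : ∃ w, x ≤ w ∧ 2 * A - τ₀ + 1 ≤ w ∧ τ₀ ≤ w :=
    ⟨max x (max (2 * A - τ₀ + 1) τ₀), by simp, by simp, by simp⟩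
  have := hG.goursat hq' (a₀ := -w) (a₁ := -τ₀) (b₀ := τ₀) (b₁ := w)
    (fun a ha => hstat _ _ (by linarith [ha.2]) (by linarith [ha.2]) (by linarith))
    (fun b hb => hstat _ _ (by linarith [hb.1]) (by linarith) (by linarith [hb.1]))
    (-x) ⟨by linarith, by linarith⟩ x ⟨by linarith, hw1⟩
  simpa using this

/-! ### The tortoise coordinate and the reduction of the mode equation -/

/-- The radius as a smooth function `ρ` of the tortoise coordinate. In terms of
`s = log (r - 2M)` the tortoise coordinate is the diffeomorphism `s ↦ 2M + e^s + 2M s` of `ℝ`. -/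
theorem exists_radius {M : ℝ} (hM : 0 < M) : ∃ ρ : ℝ → ℝ, ContDiff ℝ ∞ ρ ∧ (∀ x, 2 * M < ρ x) ∧
    (∀ x, rstar M (ρ x) = x) ∧ (∀ r, 2 * M < r → ρ (rstar M r) = r) ∧
    (∀ x, HasDerivAt ρ ((ρ x - 2 * M) / ρ x) x) := by
  let k : ℝ → ℝ := fun s => 2 * M + Real.exp s + 2 * M * s
  have hk : ContDiff ℝ ∞ k := by fun_prop
  have hmono : StrictMono k := fun s t hst => by
    have := Real.exp_lt_exp.2 hst
    simp only [k]
    nlinarith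
  have hsurj : Surjective k := by
    refine hk.continuous.surjective ?_ ?_
    · refine tendsto_atTop_mono (f := fun s => 2 * M * s) (fun s => ?_)
        (tendsto_id.const_mul_atTop (by positivity))
      have := Real.exp_pos s
      simp only [k]; linarith
    · exact Tendsto.add_atBot (tendsto_const_nhds.add Real.tendsto_exp_atBot)
        (tendsto_id.const_mul_atBot (by positivity))
  let e : ℝ ≃ₜ ℝ := (hmono.orderIsoOfSurjective k hsurj).toHomeomorph
  have he : ∀ s, e s = k s := fun s => rfl
  have hder : ∀ s, HasDerivAt e (Real.exp s + 2 * M) s := fun s => by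
    have := ((Real.hasDerivAt_exp s).const_add (2 * M)).add ((hasDerivAt_id' s).const_mul (2 * M))
    exact this.congr_deriv (by ring)
  have hpos : ∀ s, Real.exp s + 2 * M ≠ 0 := fun s => by positivity
  have hsymm : ContDiff ℝ ∞ e.symm := e.contDiff_symm_deriv hpos hder hk
  refine ⟨fun x => 2 * M + Real.exp (e.symm x), by fun_prop, fun x => by
    have := Real.exp_pos (e.symm x); linarith, fun x => ?_, fun r hr => ?_, fun x => ?_⟩
  · rw [rstar, add_sub_cancel_left, Real.log_exp]
    exact e.apply_symm_apply x
  · have : rstar M r = e (Real.log (r - 2 * M)) := by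
      rw [he, rstar]; simp only [k]
      rw [Real.exp_log (by linarith)]; ring
    simp only
    rw [this, e.symm_apply_apply, Real.exp_log (by linarith)]; ring
  · have h1 : HasDerivAt e.symm (Real.exp (e.symm x) + 2 * M)⁻¹ x :=
      HasDerivAt.of_local_left_inverse hsymm.continuous.continuousAt (hder _) (hpos _)
        (Eventually.of_forall e.apply_symm_apply)
    refine (h1.exp.const_add (2 * M)).congr_deriv ?_
    simp only [add_sub_cancel_left]
    rw [add_comm (2 * M), div_eq_mul_inv]

/-- The Regge–Wheeler reduction: in tortoise coordinates `G = r u` solves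
`G_tt - G_xx + V G = 0` with `V = (1 - 2M/r) (2M/r³ + λ²/r²)`. -/
theorem regge_wheeler {M lam : ℝ} (hM : 0 < M) {u : ℝ → ℝ → ℝ} (hu : IsModeSolution M lam u)
    {ρ : ℝ → ℝ} (hρ : ContDiff ℝ ∞ ρ) (hρM : ∀ x, 2 * M < ρ x)
    (hρ' : ∀ x, HasDerivAt ρ ((ρ x - 2 * M) / ρ x) x) :
    ContDiff ℝ ∞ (uncurry fun t x => ρ x * u t (ρ x)) ∧
    (∀ t x, pdt (fun t x => ρ x * u t (ρ x)) t x = ρ x * pdt u t (ρ x)) ∧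
    ∀ t x, pdt (pdt fun t x => ρ x * u t (ρ x)) t x - pdr (pdr fun t x => ρ x * u t (ρ x)) t x
      = -((ρ x - 2 * M) / ρ x * (2 * M / ρ x ^ 3 + lam ^ 2 / ρ x ^ 2)) * (ρ x * u t (ρ x)) := by
  obtain ⟨hus, hpde⟩ := hu
  have hopen : IsOpen ((univ : Set ℝ) ×ˢ Ioi (2 * M)) := isOpen_univ.prod isOpen_Ioi
  have hur : ∀ t, ContDiffOn ℝ ∞ (fun s => u t s) (Ioi (2 * M)) := fun t =>
    hus.comp (f := fun s => (t, s)) (by fun_prop) (fun s hs => ⟨mem_univ _, hs⟩)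
  have hur1 : ∀ t r, 2 * M < r → HasDerivAt (fun s => u t s) (pdr u t r) r := fun t r hr =>
    (((hur t).differentiableOn (by simp)).differentiableAt (Ioi_mem_nhds hr)).hasDerivAt
  have hur2 : ∀ t r, 2 * M < r → HasDerivAt (fun s => pdr u t s) (pdrr u t r) r := fun t r hr =>
    ((((hur t).deriv_of_isOpen (m := ∞) isOpen_Ioi (by simp)).differentiableOn
      (by simp)).differentiableAt (Ioi_mem_nhds hr)).hasDerivAt
  have hdt : ∀ t x, pdt (fun t x => ρ x * u t (ρ x)) t x = ρ x * pdt u t (ρ x) := fun t x =>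
    deriv_const_mul_field' _ |> fun h => congrFun h t
  have hdtt : ∀ t x, pdt (pdt fun t x => ρ x * u t (ρ x)) t x = ρ x * pdtt u t (ρ x) := by
    intro t x
    have : (fun s => pdt (fun t x => ρ x * u t (ρ x)) s x) = fun s => ρ x * pdt u s (ρ x) :=
      funext fun s => hdt s x
    rw [pdt, this]
    exact congrFun (deriv_const_mul_field' _) t
  refine ⟨?_, hdt, fun t x => ?_⟩
  · refine (hρ.comp contDiff_snd).mul ?_
    rw [← contDiffOn_univ]
    exact hus.comp (f := fun z : ℝ × ℝ => (z.1, ρ z.2))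
      (by fun_prop) (fun z _ => ⟨mem_univ _, hρM z.2⟩)
  · have hdr : ∀ x, pdr (fun t x => ρ x * u t (ρ x)) t x =
        (ρ x - 2 * M) / ρ x * (u t (ρ x) + ρ x * pdr u t (ρ x)) := by
      intro x
      have := (hρ' x).mul ((hur1 t (ρ x) (hρM x)).comp x (hρ' x))
      refine this.deriv.trans ?_
      simp only [comp_apply]; ring
    have hr : 0 < ρ x := by linarith [hρM x]
    have hr2 : ρ x - 2 * M ≠ 0 := by linarith [hρM x]
    have hdrr : pdr (pdr fun t x => ρ x * u t (ρ x)) t x =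
        (ρ x - 2 * M) / ρ x * (2 * M / ρ x ^ 2 * (u t (ρ x) + ρ x * pdr u t (ρ x)) +
          (ρ x - 2 * M) / ρ x * (2 * pdr u t (ρ x) + ρ x * pdrr u t (ρ x))) := by
      have h1 := (((hρ' x).sub_const (2 * M)).div (hρ' x) hr.ne').mul
        (((hur1 t (ρ x) (hρM x)).comp x (hρ' x)).add
          ((hρ' x).mul ((hur2 t (ρ x) (hρM x)).comp x (hρ' x))))
      have h2 : (fun s => pdr (fun t x => ρ x * u t (ρ x)) t s) = fun x =>
        (ρ x - 2 * M) / ρ x * (u t (ρ x) + ρ x * pdr u t (ρ x)) := funext hdr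
      rw [pdr, h2]
      refine h1.deriv.trans ?_
      simp only [comp_apply, Pi.div_apply, Pi.mul_apply, Pi.add_apply]
      field_simp
      ring
    rw [hdtt, hdrr]
    have := hpde t (ρ x) (hρM x)
    field_simp at this ⊢
    linear_combination -ρ x * this

theorem potential_bounds {M lam r : ℝ} (hM : 0 < M) (hr : 2 * M < r) :
    |(r - 2 * M) / r * (2 * M / r ^ 3 + lam ^ 2 / r ^ 2)| ≤ (1 + lam ^ 2) / r ^ 2 := by
  have hr0 : 0 < r := by linarith
  have h0 : 0 ≤ (r - 2 * M) / r := div_nonneg (by linarith) hr0.le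
  have h1 : (r - 2 * M) / r ≤ 1 := by rw [div_le_one hr0]; linarith
  have h2 : 2 * M / r ^ 3 ≤ 1 / r ^ 2 := by
    rw [div_le_div_iff₀ (by positivity) (by positivity)]
    nlinarith [sq_nonneg r, pow_pos hr0 2]
  have h3 : 0 ≤ 2 * M / r ^ 3 + lam ^ 2 / r ^ 2 := by positivity
  rw [abs_of_nonneg (mul_nonneg h0 h3), add_div]
  nlinarith

theorem rstar_le {M r : ℝ} (hM : 0 < M) (hr : 2 * M < r) : rstar M r ≤ (1 + 2 * M) * r := by
  have := Real.log_le_sub_one_of_pos (show 0 < r - 2 * M by linarith)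
  rw [rstar]
  nlinarith

theorem rstar_lt {M r s : ℝ} (hM : 0 < M) (hr : 2 * M < r) (hrs : r < s) :
    rstar M r < rstar M s := by
  have := Real.log_lt_log (show 0 < r - 2 * M by linarith) (show r - 2 * M < s - 2 * M by linarith)
  rw [rstar, rstar]
  nlinarith

/-- Support theorem at null infinity (Theorem 5.4, single mode): if the forward
radiation field at null infinity vanishes for `τ̄ ≤ −τ̄₀` and the backward one vanishes
for `τ̄ ≥ τ̄₀`, then the data vanish where `r_*(r) > τ̄₀`. -/
theorem support_theorem_null_infinity
    (M lam : ℝ) (hM : 0 < M) (hlam : 0 ≤ lam)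
    (u : ℝ → ℝ → ℝ) (hu : IsModeSolution M lam u)
    (φ ψ : ℝ → ℝ) (hφ : ∀ r : ℝ, φ r = u 0 r) (hψ : ∀ r : ℝ, ψ r = pdt u 0 r)
    (hsupp : ∃ r₁ r₂ : ℝ, 2*M < r₁ ∧ r₁ ≤ r₂ ∧
      ∀ r : ℝ, 2*M < r → r ∉ Set.Icc r₁ r₂ → φ r = 0 ∧ ψ r = 0)
    (τ₀ : ℝ) (g gbwd : ℝ → ℝ)
    (hg : IsFwdRadInfty M u g) (hg0 : ∀ τ : ℝ, τ ≤ -τ₀ → g τ = 0)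
    (hgbwd : IsBwdRadInfty M u gbwd) (hgbwd0 : ∀ τ : ℝ, τ₀ ≤ τ → gbwd τ = 0) :
    ∀ r : ℝ, 2*M < r → τ₀ < rstar M r → φ r = 0 ∧ ψ r = 0 := by
  obtain ⟨ρ, hρ, hρM, hρr, hrρ, hρ'⟩ := exists_radius hM
  obtain ⟨hG, hGt, hw⟩ := regge_wheeler hM hu hρ hρM hρ'
  obtain ⟨r₁, r₂, h₁, h₁₂, hzero⟩ := hsupp
  have hρpos : ∀ x, 0 < ρ x := fun x => by linarith [hρM x]
  have hρlin : ∀ x, x ≤ (1 + 2 * M) * ρ x := fun x => by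
    simpa [hρr] using rstar_le hM (hρM x)
  have hρtop : Tendsto ρ atTop atTop :=
    tendsto_atTop_mono (f := fun x => x / (1 + 2 * M))
      (fun x => by rw [div_le_iff₀ (by positivity)]; linarith [hρlin x])
      (tendsto_id.atTop_div_const (by positivity))
  have hout : ∀ x, rstar M r₂ < x → φ (ρ x) = 0 ∧ ψ (ρ x) = 0 := by
    intro x hx
    refine hzero (ρ x) (hρM x) fun hmem => ?_
    rcases hmem.2.lt_or_eq with hlt | heq
    · have := rstar_lt hM (hρM x) hlt
      rw [hρr] at this
      linarith
    · rw [← heq, hρr] at hx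
      exact lt_irrefl _ hx
  have key := wave_support (A := rstar M r₂) (τ₀ := τ₀)
    (K := (1 + lam ^ 2) * (1 + 2 * M) ^ 2) (K' := (1 + lam ^ 2) / (2 * M) ^ 2) hG hw (by positivity)
    (fun x hx => by
      refine (potential_bounds hM (hρM x)).trans ?_
      rw [div_le_div_iff₀ (pow_pos (hρpos x) 2) (by positivity), mul_assoc, ← mul_pow]
      gcongr
      exact hρlin x)
    (fun x => by
      refine (potential_bounds hM (hρM x)).trans ?_
      gcongr
      exact (hρM x).le)
    (fun x hx => by rw [← hφ, (hout x hx).1, mul_zero])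
    (fun x hx => by rw [hGt, ← hψ, (hout x hx).2, mul_zero])
    (fun τ hτ => by
      have := (hg τ).comp hρtop
      rw [hg0 τ hτ] at this
      refine this.congr fun x => ?_
      rw [hGt, comp_apply, hρr])
    (fun τ hτ => by
      have := (hgbwd τ).comp hρtop
      rw [hgbwd0 τ hτ] at this
      refine this.congr fun x => ?_
      rw [hGt, comp_apply, hρr])
  intro r hr hτr
  obtain ⟨e1, e2⟩ := key (rstar M r) hτr
  rw [hGt] at e2
  rw [hrρ r hr] at e1 e2
  have hr0 : r ≠ 0 := by linarith
  rw [hφ, hψ]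
  exact ⟨(mul_eq_zero.1 e1).resolve_left hr0, (mul_eq_zero.1 e2).resolve_left hr0⟩
end

section
/- Let u be a λ-mode solution with initial data (0,ψ), where ψ is smooth and compactly supported in (2M,∞), and let τ̄₀ ∈ ℝ. If g is a forward radiation field of u at null infinity with g(τ̄) = 0 for all τ̄ ≤ −τ̄₀, then ψ(r) = 0 for every r ∈ (2M,∞) with r_*(r) > τ̄₀. (Corollary 5.5, for a single spherical-harmonic mode.) -/
/-!
With `x = r_*` and `v = r u` the mode equation becomes `∂ₜ²v - ∂ₓ²v + V v = 0`, where
`V = (1 - 2M/r)(λ²/r² + 2M/r³) ≥ 0`. In the null coordinates `p = t - x`, `q = t + x` it is the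
first-order system `∂_p W = B`, `∂_q W = A`, `∂_q B = ∂_p A = -V W / 4` for `W = v`, and the
potential has an explicit bounded antiderivative: `N = λ²/r + M/r²` satisfies `dN/dx = -V`,
`0 ≤ N ≤ κ` and `N → 0` at infinity (`mode_nullSystem`).

If `|W| ≤ K e^{κp}` on `t ≥ 0`, integrating `∂_q B` along outgoing lines changes `B` by at most
`κ K e^{κp} / 2`, and integrating `∂_p W = B` from `t = 0`, where `W = 0`, turns this into a
contribution of at most `K e^{κp} / 2` to `W`. This contraction is used twice.

* Starting the outgoing lines at `t = 0`, where `B = r ψ / 2` has compact support, it yields a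
  global bound `|W| ≤ K e^{κp}` on `t ≥ 0` (`NullSystem.apriori`). The same bound, integrated
  along incoming lines, gives `A → 0` at null infinity, so there `B` tends to the radiation
  field `lim (A + B) = g(p)`.
* For `p ≤ -τ̄₀` the radiation field vanishes, so the outgoing lines can be started at null
  infinity with zero data. The contraction, now without source, forces `W` and `B` to vanish for
  `p ≤ -τ̄₀`, `t ≥ 0` (`NullSystem.data_eq_zero`). On `t = 0` this says `r ψ(r) = 0` for
  `r_* ≥ τ̄₀`.
-/

open MeasureTheory Filter Set Function
open scoped ContDiff

/-! ### Abstract first-order system in null coordinates -/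

/-- The first-order system `∂_p W = B`, `∂_q B = ∂_p A = -V W / 4` in null coordinates
`p = t - x`, `q = t + x` (so `x = (q - p)/2` and `t = 0` is the line `p = -q`), with vanishing
initial value of `W` and a nonnegative potential `V` that has a bounded antiderivative `-N`
normalised by `N → 0` at `+∞`. The constant `κ` is a bound for `N`, that is, for the total mass
of `V`; it is also the exponential rate of the weights in the estimates below. -/
structure NullSystem (W A B : ℝ → ℝ → ℝ) (V N : ℝ → ℝ) (κ : ℝ) : Prop where
  kpos : 0 < κ
  cont : Continuous (uncurry W)
  dW : ∀ p q, HasDerivAt (fun s => W s q) (B p q) p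
  dB : ∀ p q, HasDerivAt (fun s => B p s) (-(V ((q - p) / 2) * W p q) / 4) q
  dA : ∀ p q, HasDerivAt (fun s => A s q) (-(V ((q - p) / 2) * W p q) / 4) p
  dN : ∀ x, HasDerivAt N (-V x) x
  V_nonneg : ∀ x, 0 ≤ V x
  N_nonneg : ∀ x, 0 ≤ N x
  N_le : ∀ x, N x ≤ κ
  N_lim : Tendsto N atTop (nhds 0)
  initial : ∀ q, W (-q) q = 0

lemma abs_sub_le_of_abs_deriv_le {f g f' g' : ℝ → ℝ} {a b : ℝ} (hab : a ≤ b)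
    (hf : ∀ s, HasDerivAt f (f' s) s) (hg : ∀ s, HasDerivAt g (g' s) s)
    (h : ∀ s, a ≤ s → s ≤ b → |f' s| ≤ g' s) : |f b - f a| ≤ g b - g a := by
  have key : ∀ F F' : ℝ → ℝ, (∀ s, HasDerivAt F (F' s) s) →
      (∀ s, a ≤ s → s ≤ b → 0 ≤ F' s) → F a ≤ F b := by
    intro F F' hF hF'
    refine monotoneOn_of_deriv_nonneg (convex_Icc a b)
      (fun s _ => (hF s).continuousAt.continuousWithinAt)
      (fun s _ => (hF s).differentiableAt.differentiableWithinAt) ?_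
      (left_mem_Icc.2 hab) (right_mem_Icc.2 hab) hab
    intro s hs
    rw [interior_Icc] at hs
    rw [(hF s).deriv]
    exact hF' s hs.1.le hs.2.le
  have h1 := key (fun s => g s - f s) _ (fun s => (hg s).sub (hf s))
    (fun s h1 h2 => by have := abs_le.1 (h s h1 h2); linarith [this.2])
  have h2 := key (fun s => g s + f s) _ (fun s => (hg s).add (hf s))
    (fun s h1 h2 => by have := abs_le.1 (h s h1 h2); linarith [this.1])
  rw [abs_le]
  constructor <;> linarith

namespace NullSystem

variable {W A B : ℝ → ℝ → ℝ} {V N : ℝ → ℝ} {κ : ℝ}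

/-- Integrating `∂_p W = B` from the line `t = 0`, where `W = 0`. -/
lemma W_bound (h : NullSystem W A B V N κ) {p q L : ℝ} (hL : 0 ≤ L) (hpq : -q ≤ p)
    (hB : ∀ s, -q ≤ s → s ≤ p → |B s q| ≤ L * Real.exp (κ * s)) :
    |W p q| ≤ L / κ * Real.exp (κ * p) := by
  have hk := h.kpos
  have hg : ∀ s, HasDerivAt (fun s => L / κ * Real.exp (κ * s)) (L * Real.exp (κ * s)) s := by
    intro s
    have h1 : HasDerivAt (fun s : ℝ => κ * s) κ s := by
      simpa using (hasDerivAt_id s).const_mul κ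
    refine (h1.exp.const_mul (L / κ)).congr_deriv ?_
    field_simp
  have := abs_sub_le_of_abs_deriv_le hpq (fun s => h.dW s q) hg hB
  simp only [h.initial, sub_zero] at this
  have h0 : 0 ≤ L / κ * Real.exp (κ * -q) := by positivity
  linarith

/-- Integrating `∂_q B = -V W / 4` along an outgoing null line: the weight is constant there,
and the integral of `V` is controlled by `N`. -/
lemma B_diff (h : NullSystem W A B V N κ) {p q q' K : ℝ} (hK : 0 ≤ K) (hq : q ≤ q')
    (hW : ∀ s, q ≤ s → s ≤ q' → |W p s| ≤ K * Real.exp (κ * p)) :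
    |B p q' - B p q| ≤ κ * K / 2 * Real.exp (κ * p) := by
  have hg : ∀ s, HasDerivAt (fun s => -(K / 2 * Real.exp (κ * p)) * N ((s - p) / 2))
      (K / 4 * Real.exp (κ * p) * V ((s - p) / 2)) s := by
    intro s
    have h1 : HasDerivAt (fun s : ℝ => (s - p) / 2) (1 / 2) s :=
      ((hasDerivAt_id s).sub_const p).div_const 2
    refine (((h.dN ((s - p) / 2)).comp s h1).const_mul _).congr_deriv ?_
    ring
  have := abs_sub_le_of_abs_deriv_le hq (fun s => h.dB p s) hg (by
    intro s h1 h2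
    have hv := h.V_nonneg ((s - p) / 2)
    rw [abs_div, abs_neg, abs_mul, abs_of_nonneg hv, abs_of_pos (by norm_num : (0:ℝ) < 4)]
    nlinarith [mul_le_mul_of_nonneg_left (hW s h1 h2) hv])
  have e := Real.exp_pos (κ * p)
  have h0 : 0 ≤ K / 2 * Real.exp (κ * p) := by positivity
  have h1 := mul_le_mul_of_nonneg_left (h.N_le ((q - p) / 2)) h0
  have h2 := mul_nonneg h0 (h.N_nonneg ((q' - p) / 2))
  linarith

/-- The counterpart of `B_diff` along an incoming null line, starting at `t = 0`; it keeps the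
factor `N`, which tends to zero at infinity. -/
lemma A_diff (h : NullSystem W A B V N κ) {p q K : ℝ} (hK : 0 ≤ K) (hpq : -q ≤ p)
    (hW : ∀ s, -q ≤ s → s ≤ p → |W s q| ≤ K * Real.exp (κ * s)) :
    |A p q - A (-q) q| ≤ K / 2 * Real.exp (κ * p) * N ((q - p) / 2) := by
  have hk := h.kpos
  have hg : ∀ s, HasDerivAt (fun s => (K / 2 * Real.exp (κ * p)) * N ((q - s) / 2))
      (K / 4 * Real.exp (κ * p) * V ((q - s) / 2)) s := by
    intro s
    have h1 : HasDerivAt (fun s : ℝ => (q - s) / 2) (-1 / 2) s :=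
      ((hasDerivAt_id s).const_sub q).div_const 2
    refine (((h.dN ((q - s) / 2)).comp s h1).const_mul _).congr_deriv ?_
    ring
  have := abs_sub_le_of_abs_deriv_le hpq (fun s => h.dA s q) hg (by
    intro s h1 h2
    have hv := h.V_nonneg ((q - s) / 2)
    rw [abs_div, abs_neg, abs_mul, abs_of_nonneg hv, abs_of_pos (by norm_num : (0:ℝ) < 4)]
    have he : Real.exp (κ * s) ≤ Real.exp (κ * p) :=
      Real.exp_le_exp.2 (mul_le_mul_of_nonneg_left h2 hk.le)
    have := (hW s h1 h2).trans (mul_le_mul_of_nonneg_left he hK)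
    nlinarith [mul_le_mul_of_nonneg_left this hv])
  have h0 : 0 ≤ K / 2 * Real.exp (κ * p) := by positivity
  have h2 := mul_nonneg h0 (h.N_nonneg ((q - -q) / 2))
  linarith

/-- Gronwall-type bound for the forward problem. On a truncated triangle continuity gives some
bound; each pass through the equation halves it, up to the contribution of the data. -/
lemma apriori (h : NullSystem W A B V N κ) {K₀ : ℝ}
    (hd : ∀ p, |B p (-p)| ≤ K₀ * Real.exp (κ * p)) {p q : ℝ} (hpq : -q ≤ p) :
    |W p q| ≤ 2 * K₀ / κ * Real.exp (κ * p) := by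
  have hk := h.kpos
  have hK₀ : 0 ≤ K₀ := by
    have := (abs_nonneg _).trans (hd 0)
    simpa using this
  obtain ⟨K₁, hK₁⟩ : ∃ K₁, ∀ z ∈ Icc (-q) p ×ˢ Icc (-p) q,
      ‖uncurry W z * Real.exp (-(κ * z.1))‖ ≤ K₁ :=
    (isCompact_Icc.prod isCompact_Icc).exists_bound_of_continuousOn
      ((h.cont.mul (by fun_prop)).continuousOn)
  have hK₁0 : 0 ≤ K₁ := (norm_nonneg _).trans
    (hK₁ (p, q) ⟨⟨hpq, le_rfl⟩, ⟨by simp only; linarith, le_rfl⟩⟩)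
  have key : ∀ n : ℕ, ∀ p' q', p' ≤ p → q' ≤ q → -q' ≤ p' →
      |W p' q'| ≤ (2 * K₀ / κ + K₁ * (1 / 2) ^ n) * Real.exp (κ * p') := by
    intro n
    induction n with
    | zero =>
      intro p' q' hp hq hpq'
      have h1 := hK₁ (p', q') ⟨⟨by simp only; linarith, hp⟩, ⟨by simp only; linarith, hq⟩⟩
      rw [norm_mul, Real.norm_eq_abs, Real.norm_eq_abs, Real.abs_exp, Real.exp_neg,
        ← div_eq_mul_inv, div_le_iff₀ (Real.exp_pos _)] at h1
      simp only [uncurry_apply_pair] at h1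
      have : 0 ≤ 2 * K₀ / κ * Real.exp (κ * p') := by positivity
      rw [pow_zero, mul_one, add_mul]
      linarith
    | succ n ih =>
      intro p' q' hp hq hpq'
      set K := 2 * K₀ / κ + K₁ * (1 / 2) ^ n with hK
      have hKn : 0 ≤ K := by positivity
      have h1 := h.W_bound (L := K₀ + κ * K / 2) (by positivity) hpq' (by
        intro s hs1 hs2
        have h2 := h.B_diff (p := s) (q := -s) (q' := q') hKn (by linarith) (fun r hr1 hr2 =>
          ih s r (by linarith) (by linarith) (by linarith))
        have h3 := hd s
        have h4 : |B s q'| ≤ |B s q' - B s (-s)| + |B s (-s)| := by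
          simpa using abs_add_le (B s q' - B s (-s)) (B s (-s))
        linarith)
      refine h1.trans (le_of_eq ?_)
      congr 1
      rw [hK, pow_succ]
      field_simp
      ring
  refine ge_of_tendsto' (f := fun n : ℕ =>
    (2 * K₀ / κ + K₁ * (1 / 2) ^ n) * Real.exp (κ * p)) (x := atTop) ?_
    (fun n => key n p q le_rfl le_rfl hpq)
  have := (tendsto_pow_atTop_nhds_zero_of_lt_one (r := (1 / 2 : ℝ)) (by norm_num)
    (by norm_num)).const_mul K₁
  simpa using (this.const_add (2 * K₀ / κ)).mul_const (Real.exp (κ * p))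

/-- Uniqueness for the characteristic problem with data at null infinity: if the radiation field
`lim (A + B)` vanishes for `p ≤ P`, then so does the initial datum `B` on `t = 0`. -/
theorem data_eq_zero (h : NullSystem W A B V N κ) {K₀ P : ℝ}
    (hd : ∀ p, |B p (-p)| ≤ K₀ * Real.exp (κ * p))
    (hA : ∀ᶠ q in atTop, A (-q) q = 0)
    (hrad : ∀ p ≤ P, Tendsto (fun q => A p q + B p q) atTop (nhds 0)) {p : ℝ} (hp : p ≤ P) :
    B p (-p) = 0 := by
  have hk := h.kpos
  have hK₀ : 0 ≤ K₀ := by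
    have := (abs_nonneg _).trans (hd 0)
    simpa using this
  have hAlim : ∀ p, Tendsto (fun q => A p q) atTop (nhds 0) := by
    intro p
    have hlin : Tendsto (fun q : ℝ => (q - p) / 2) atTop atTop :=
      (tendsto_atTop_add_const_right atTop (-p) tendsto_id).atTop_div_const (by norm_num)
    have hz := (h.N_lim.comp hlin).const_mul (2 * K₀ / κ / 2 * Real.exp (κ * p))
    rw [mul_zero] at hz
    refine squeeze_zero_norm' ?_ hz
    filter_upwards [hA, eventually_ge_atTop (-p)] with q hq hpq
    have := h.A_diff (p := p) (q := q) (K := 2 * K₀ / κ) (by positivity) (by linarith)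
      (fun s hs _ => h.apriori hd hs)
    rwa [hq, sub_zero] at this
  have hBlim : ∀ p ≤ P, Tendsto (fun q => B p q) atTop (nhds 0) := by
    intro p hp
    simpa using (hrad p hp).sub (hAlim p)
  have hBbd : ∀ K, 0 ≤ K → (∀ p q, p ≤ P → -q ≤ p → |W p q| ≤ K * Real.exp (κ * p)) →
      ∀ p q, p ≤ P → -q ≤ p → |B p q| ≤ κ * K / 2 * Real.exp (κ * p) := by
    intro K hK hW p q hp hpq
    have hlim : Tendsto (fun q' => |B p q' - B p q|) atTop (nhds |0 - B p q|) :=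
      ((hBlim p hp).sub_const _).abs
    rw [zero_sub, abs_neg] at hlim
    refine le_of_tendsto hlim ?_
    filter_upwards [eventually_ge_atTop q] with q' hq'
    exact h.B_diff hK hq' (fun s hs _ => hW p s hp (by linarith))
  have key : ∀ n : ℕ, ∀ p q, p ≤ P → -q ≤ p →
      |W p q| ≤ (2 * K₀ / κ * (1 / 2) ^ n) * Real.exp (κ * p) := by
    intro n
    induction n with
    | zero =>
      intro p q _ hpq
      simpa using h.apriori hd hpq
    | succ n ih =>
      intro p q hp hpq
      refine (h.W_bound (L := κ * (2 * K₀ / κ * (1 / 2) ^ n) / 2) (by positivity) hpq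
        (fun s hs hsp => hBbd _ (by positivity) ih s q (hsp.trans hp) hs)).trans (le_of_eq ?_)
      rw [pow_succ]
      field_simp
  have hfin : ∀ n : ℕ, |B p (-p)| ≤ κ * (2 * K₀ / κ * (1 / 2) ^ n) / 2 * Real.exp (κ * p) :=
    fun n => hBbd _ (by positivity) (key n) p (-p) hp (by simp)
  have hz : Tendsto (fun n : ℕ => κ * (2 * K₀ / κ * (1 / 2) ^ n) / 2 * Real.exp (κ * p)) atTop
      (nhds 0) := by
    have := (tendsto_pow_atTop_nhds_zero_of_lt_one (r := (1 / 2 : ℝ)) (by norm_num)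
      (by norm_num)).const_mul (2 * K₀ / κ)
    simpa using ((this.const_mul κ).div_const 2).mul_const (Real.exp (κ * p))
  exact abs_nonpos_iff.1 (ge_of_tendsto' hz hfin)

end NullSystem

/-! ### The inverse tortoise coordinate -/

/-- Existence of the inverse `ρ` of the tortoise coordinate, with `ρ' = (ρ - 2M)/ρ`. It is built
from the variable `y = log (r - 2M)`, in which the tortoise coordinate is the increasing
bijection `y ↦ 2M + e^y + 2M y` of the whole line. -/
lemma exists_inverse_rstar {M : ℝ} (hM : 0 < M) : ∃ ρ : ℝ → ℝ,
    (∀ x, 2 * M < ρ x) ∧ (∀ x, rstar M (ρ x) = x) ∧ (∀ r, 2 * M < r → ρ (rstar M r) = r) ∧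
    Monotone ρ ∧ ∀ x, HasDerivAt ρ ((ρ x - 2 * M) / ρ x) x := by
  set F : ℝ → ℝ := fun y => 2 * M + Real.exp y + 2 * M * y with hF
  have hmono : StrictMono F := by
    intro a b hab
    have h1 := Real.exp_lt_exp.2 hab
    have h2 := mul_lt_mul_of_pos_left hab (by linarith : 0 < 2 * M)
    simp only [hF]
    linarith
  have hcont : Continuous F := by fun_prop
  have hlin : Tendsto (fun y : ℝ => 2 * M * y) atTop atTop :=
    tendsto_id.const_mul_atTop (by linarith)
  have htop : Tendsto F atTop atTop := by
    refine tendsto_atTop_mono (fun y => ?_) hlin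
    simp only [hF]
    linarith [Real.exp_pos y]
  have hlin' : Tendsto (fun y : ℝ => 2 * M + 1 + 2 * M * y) atBot atBot :=
    tendsto_atBot_add_const_left _ _ (tendsto_id.const_mul_atBot (by linarith))
  have hbot : Tendsto F atBot atBot := by
    refine tendsto_atBot_mono' _ ?_ hlin'
    filter_upwards [eventually_le_atBot 0] with y hy
    have := Real.exp_le_one_iff.2 hy
    simp only [hF]
    linarith
  have hsurj : Surjective F := hcont.surjective htop hbot
  set e := hmono.orderIsoOfSurjective F hsurj with he
  have heF : ∀ y, e y = F y := fun y => rfl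
  have hright : ∀ x, F (e.symm x) = x := fun x => e.apply_symm_apply x
  have hec : Continuous e.symm := e.symm.continuous
  refine ⟨fun x => 2 * M + Real.exp (e.symm x), ?_, ?_, ?_, ?_, ?_⟩
  · intro x
    simp only
    linarith [Real.exp_pos (e.symm x)]
  · intro x
    simp only [rstar, add_sub_cancel_left, Real.log_exp]
    exact hright x
  · intro r hr
    have hr' : 0 < r - 2 * M := by linarith
    have h1 : rstar M r = e (Real.log (r - 2 * M)) := by
      rw [heF]
      simp only [hF, rstar, Real.exp_log hr']
      ring
    simp only
    rw [h1, e.symm_apply_apply, Real.exp_log hr']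
    ring
  · intro a b hab
    have := Real.exp_le_exp.2 (e.symm.monotone hab)
    simp only
    linarith
  · intro x
    have hFd : HasDerivAt F (Real.exp (e.symm x) + 2 * M) (e.symm x) := by
      have h1 : HasDerivAt (fun y : ℝ => 2 * M * y) (2 * M) (e.symm x) := by
        simpa using (hasDerivAt_id (e.symm x)).const_mul (2 * M)
      exact ((Real.hasDerivAt_exp _).const_add (2 * M)).add h1
    have hpos := Real.exp_pos (e.symm x)
    have h2 := HasDerivAt.of_local_left_inverse hec.continuousAt hFd (by positivity)
      (Eventually.of_forall hright)
    refine (h2.exp.const_add (2 * M)).congr_deriv ?_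
    simp only
    rw [add_sub_cancel_left, add_comm (2 * M), div_eq_mul_inv]

/-! ### Partial derivatives -/

/-- The Schwarzschild exterior in the `(t, r)` plane. -/
def exterior (M : ℝ) : Set (ℝ × ℝ) := (Set.univ : Set ℝ) ×ˢ Set.Ioi (2 * M)

lemma isOpen_exterior (M : ℝ) : IsOpen (exterior M) := isOpen_univ.prod isOpen_Ioi

section Partial

variable {M : ℝ} {w : ℝ → ℝ → ℝ}

lemma mem_exterior {t r : ℝ} (hr : 2 * M < r) : (t, r) ∈ exterior M := ⟨trivial, hr⟩

lemma hasFDerivAt_of_smooth (hw : ContDiffOn ℝ ∞ (uncurry w) (exterior M)) {t r : ℝ}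
    (hr : 2 * M < r) : HasFDerivAt (uncurry w) (fderiv ℝ (uncurry w) (t, r)) (t, r) :=
  ((hw.contDiffAt ((isOpen_exterior M).mem_nhds (mem_exterior hr))).differentiableAt
    (by simp)).hasFDerivAt

lemma pdt_eq_fderiv (hw : ContDiffOn ℝ ∞ (uncurry w) (exterior M)) {t r : ℝ}
    (hr : 2 * M < r) : pdt w t r = fderiv ℝ (uncurry w) (t, r) (1, 0) := by
  have h := (hasFDerivAt_of_smooth hw (t := t) hr).comp_hasDerivAt (f := fun s => (s, r)) t
    ((hasDerivAt_id t).prodMk (hasDerivAt_const t r))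
  exact h.deriv

lemma pdr_eq_fderiv (hw : ContDiffOn ℝ ∞ (uncurry w) (exterior M)) {t r : ℝ}
    (hr : 2 * M < r) : pdr w t r = fderiv ℝ (uncurry w) (t, r) (0, 1) := by
  have h := (hasFDerivAt_of_smooth hw (t := t) hr).comp_hasDerivAt (f := fun s => (t, s)) r
    ((hasDerivAt_const r t).prodMk (hasDerivAt_id r))
  exact h.deriv

lemma smooth_pdt (hw : ContDiffOn ℝ ∞ (uncurry w) (exterior M)) :
    ContDiffOn ℝ ∞ (uncurry (pdt w)) (exterior M) := by
  have h := (hw.fderiv_of_isOpen (isOpen_exterior M) (m := ∞) (by simp)).clm_apply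
    (contDiffOn_const (c := ((1 : ℝ), (0 : ℝ))))
  exact h.congr (fun z hz => pdt_eq_fderiv hw hz.2)

lemma smooth_pdr (hw : ContDiffOn ℝ ∞ (uncurry w) (exterior M)) :
    ContDiffOn ℝ ∞ (uncurry (pdr w)) (exterior M) := by
  have h := (hw.fderiv_of_isOpen (isOpen_exterior M) (m := ∞) (by simp)).clm_apply
    (contDiffOn_const (c := ((0 : ℝ), (1 : ℝ))))
  exact h.congr (fun z hz => pdr_eq_fderiv hw hz.2)

lemma hasDerivAt_comp_curve (hw : ContDiffOn ℝ ∞ (uncurry w) (exterior M)) {c d : ℝ → ℝ}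
    {c' d' s : ℝ} (hc : HasDerivAt c c' s) (hd : HasDerivAt d d' s) (hr : 2 * M < d s) :
    HasDerivAt (fun s => w (c s) (d s))
      (c' * pdt w (c s) (d s) + d' * pdr w (c s) (d s)) s := by
  have h := (hasFDerivAt_of_smooth hw (t := c s) hr).comp_hasDerivAt (f := fun s => (c s, d s)) s
    (hc.prodMk hd)
  refine h.congr_deriv ?_
  rw [pdt_eq_fderiv hw hr, pdr_eq_fderiv hw hr, ← smul_eq_mul, ← smul_eq_mul, ← map_smul,
    ← map_smul, ← map_add]
  simp

lemma pdt_pdr_comm_s5 (hw : ContDiffOn ℝ ∞ (uncurry w) (exterior M)) {t r : ℝ}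
    (hr : 2 * M < r) : pdt (pdr w) t r = pdr (pdt w) t r := by
  have hnhds := (isOpen_exterior M).mem_nhds (mem_exterior (t := t) hr)
  have hfd : DifferentiableAt ℝ (fderiv ℝ (uncurry w)) (t, r) :=
    (((hw.fderiv_of_isOpen (isOpen_exterior M) (m := ∞) (by simp)).contDiffAt
      hnhds)).differentiableAt (by simp)
  have hsymm : IsSymmSndFDerivAt ℝ (uncurry w) (t, r) :=
    (hw.contDiffAt hnhds).isSymmSndFDerivAt (by
      rw [minSmoothness_of_isRCLikeNormedField]
      exact WithTop.coe_le_coe.2 (le_top : (2 : ℕ∞) ≤ ⊤))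
  have e1 : uncurry (pdr w) =ᶠ[nhds (t, r)] fun z => fderiv ℝ (uncurry w) z (0, 1) := by
    filter_upwards [hnhds] with z hz
    exact pdr_eq_fderiv hw hz.2
  have e2 : uncurry (pdt w) =ᶠ[nhds (t, r)] fun z => fderiv ℝ (uncurry w) z (1, 0) := by
    filter_upwards [hnhds] with z hz
    exact pdt_eq_fderiv hw hz.2
  rw [pdt_eq_fderiv (smooth_pdr hw) hr, pdr_eq_fderiv (smooth_pdt hw) hr, e1.fderiv_eq,
    e2.fderiv_eq, fderiv_clm_apply hfd (differentiableAt_const _),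
    fderiv_clm_apply hfd (differentiableAt_const _)]
  simpa using hsymm.eq (1, 0) (0, 1)

end Partial

/-! ### Mode solutions in null coordinates -/

section Mode

/-- `r u` in the null coordinates `p = t - r_*`, `q = t + r_*`; here and below `ρ` is the inverse
tortoise coordinate. -/
noncomputable def modeW (u : ℝ → ℝ → ℝ) (ρ : ℝ → ℝ) (p q : ℝ) : ℝ :=
  ρ ((q - p) / 2) * u ((p + q) / 2) (ρ ((q - p) / 2))

/-- The derivative of `r u` with respect to `t`, in null coordinates. -/
noncomputable def modeT (u : ℝ → ℝ → ℝ) (ρ : ℝ → ℝ) (p q : ℝ) : ℝ :=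
  ρ ((q - p) / 2) * pdt u ((p + q) / 2) (ρ ((q - p) / 2))

/-- The derivative of `r u` with respect to `r_*`, in null coordinates. -/
noncomputable def modeX (M : ℝ) (u : ℝ → ℝ → ℝ) (ρ : ℝ → ℝ) (p q : ℝ) : ℝ :=
  (1 - 2 * M / ρ ((q - p) / 2)) * u ((p + q) / 2) (ρ ((q - p) / 2))
    + (ρ ((q - p) / 2) - 2 * M) * pdr u ((p + q) / 2) (ρ ((q - p) / 2))

/-- The potential `(1 - 2M/r)(λ²/r² + 2M/r³)` as a function of `r_*`. -/
noncomputable def modeV (M lam : ℝ) (ρ : ℝ → ℝ) (x : ℝ) : ℝ :=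
  (lam ^ 2 / ρ x ^ 2 + 2 * M / ρ x ^ 3) * ((ρ x - 2 * M) / ρ x)

/-- The function `λ²/r + M/r²`, which satisfies `dN/dr_* = -V`. -/
noncomputable def modeN (M lam : ℝ) (ρ : ℝ → ℝ) (x : ℝ) : ℝ :=
  lam ^ 2 / ρ x + M / ρ x ^ 2

variable {M lam : ℝ} {u : ℝ → ℝ → ℝ} {ρ : ℝ → ℝ}

/-- The derivatives of `∂_t (r u)` and `∂_{r_*} (r u)` along an arbitrary curve `(c, d)` in the
`(t, r_*)` plane, before the equation is used. -/
lemma hasDerivAt_mode (hM : 0 < M) (hu : ContDiffOn ℝ ∞ (uncurry u) (exterior M))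
    (hρ : ∀ x, 2 * M < ρ x)
    (hρ' : ∀ x, HasDerivAt ρ ((ρ x - 2 * M) / ρ x) x) {c d : ℝ → ℝ} {c' d' s : ℝ}
    (hc : HasDerivAt c c' s) (hd : HasDerivAt d d' s) {t r f : ℝ} (ht : c s = t)
    (hr : ρ (d s) = r) (hf : (r - 2 * M) / r = f) :
    HasDerivAt (fun s => ρ (d s) * u (c s) (ρ (d s)))
      (c' * (r * pdt u t r) + d' * (f * u t r + r * f * pdr u t r)) s ∧
    HasDerivAt (fun s => ρ (d s) * pdt u (c s) (ρ (d s)))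
      (c' * (r * pdtt u t r) + d' * (f * pdt u t r + r * f * pdr (pdt u) t r)) s ∧
    HasDerivAt (fun s => (1 - 2 * M / ρ (d s)) * u (c s) (ρ (d s))
        + (ρ (d s) - 2 * M) * pdr u (c s) (ρ (d s)))
      (c' * (f * pdt u t r + r * f * pdr (pdt u) t r)
        + d' * (2 * M / r ^ 2 * f * u t r + (f ^ 2 + f) * pdr u t r
          + r * f ^ 2 * pdrr u t r)) s := by
  have hR : HasDerivAt (fun s => ρ (d s)) (f * d') s := by
    have := (hρ' (d s)).comp s hd
    rw [hr, hf] at this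
    exact this
  have hr2 : 2 * M < r := hr ▸ hρ (d s)
  have hr0 : r ≠ 0 := by linarith
  have hrs : 2 * M < ρ (d s) := hρ _
  have h1 := hasDerivAt_comp_curve hu hc hR hrs
  have h2 := hasDerivAt_comp_curve (smooth_pdt hu) hc hR hrs
  have h3 := hasDerivAt_comp_curve (smooth_pdr hu) hc hR hrs
  rw [ht, hr] at h1 h2 h3
  rw [pdt_pdr_comm_s5 hu hr2] at h3
  have hf2 : r - 2 * M = r * f := by rw [← hf]; field_simp
  have hf3 : 1 - 2 * M / r = f := by rw [← hf]; field_simp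
  refine ⟨(hR.mul h1).congr_deriv ?_, (hR.mul h2).congr_deriv ?_, ?_⟩
  · rw [ht, hr]; ring
  · rw [ht, hr]
    change _ + _ * (_ * pdtt u t r + _) = _
    ring
  · have h4 := ((hR.inv (by rw [hr]; exact hr0)).const_mul (2 * M)).const_sub 1
    refine ((h4.mul h1).add ((hR.sub_const (2 * M)).mul h3)).congr_deriv ?_
    simp only [Pi.inv_apply]
    rw [ht, hr]
    change _ + _ + (_ + _ * (_ + _ * pdrr u t r)) = _
    rw [← div_eq_mul_inv, hf3, hf2]
    field_simp
    ring

/-- The wave equation for `r u` in the coordinates `(t, r_*)`. -/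
lemma reduced_equation (hM : 0 < M) (hu : IsModeSolution M lam u) {t r f : ℝ} (hr : 2 * M < r)
    (hf : (r - 2 * M) / r = f) :
    r * pdtt u t r = 2 * M / r ^ 2 * f * u t r + (f ^ 2 + f) * pdr u t r
      + r * f ^ 2 * pdrr u t r - (lam ^ 2 / r ^ 2 + 2 * M / r ^ 3) * f * (r * u t r) := by
  have h := hu.2 t r hr
  have hr0 : r ≠ 0 := by linarith
  have hr1 : r - 2 * M ≠ 0 := by linarith
  have h2 : pdtt u t r = ((r-2*M)/r) * (((r-2*M)/r) * pdrr u t r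
      + (2*(r-M)/r^2) * pdr u t r - lam^2/r^2 * u t r) := by
    field_simp at h ⊢
    linear_combination -h
  rw [h2, ← hf]
  field_simp
  ring

lemma mode_nullSystem (hM : 0 < M) (hu : IsModeSolution M lam u)
    (hφ : ∀ r : ℝ, 2*M < r → u 0 r = 0)
    (hρ : ∀ x, 2 * M < ρ x) (hρ' : ∀ x, HasDerivAt ρ ((ρ x - 2 * M) / ρ x) x)
    (hlim : Tendsto ρ atTop atTop) :
    NullSystem (modeW u ρ) (fun p q => (modeT u ρ p q + modeX M u ρ p q) / 2)
      (fun p q => (modeT u ρ p q - modeX M u ρ p q) / 2) (modeV M lam ρ) (modeN M lam ρ)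
      (lam ^ 2 / (2 * M) + M / (2 * M) ^ 2) := by
  have hpos : ∀ x, 0 < ρ x := fun x => by linarith [hρ x]
  have hsm : ContDiffOn ℝ ∞ (uncurry u) (exterior M) := hu.1
  have hρc : Continuous ρ := continuous_iff_continuousAt.2 fun x => (hρ' x).continuousAt
  have tp : ∀ p q : ℝ, HasDerivAt (fun s : ℝ => (s + q) / 2) (1 / 2) p := fun p q =>
    ((hasDerivAt_id p).add_const q).div_const 2
  have tq : ∀ p q : ℝ, HasDerivAt (fun s : ℝ => (p + s) / 2) (1 / 2) q := fun p q =>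
    ((hasDerivAt_id q).const_add p).div_const 2
  have xp : ∀ p q : ℝ, HasDerivAt (fun s : ℝ => (q - s) / 2) (-1 / 2) p := fun p q =>
    ((hasDerivAt_id p).const_sub q).div_const 2
  have xq : ∀ p q : ℝ, HasDerivAt (fun s : ℝ => (s - p) / 2) (1 / 2) q := fun p q =>
    ((hasDerivAt_id q).sub_const p).div_const 2
  refine ⟨by positivity, ?_, ?_, ?_, ?_, ?_, ?_, ?_, ?_, ?_, ?_⟩
  · have h1 : Continuous fun z : ℝ × ℝ => ρ ((z.2 - z.1) / 2) := by fun_prop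
    have h2 : Continuous fun z : ℝ × ℝ => ((z.1 + z.2) / 2, ρ ((z.2 - z.1) / 2)) := by fun_prop
    exact h1.mul (hsm.continuousOn.comp_continuous h2 fun z => mem_exterior (hρ _))
  · intro p q
    obtain ⟨h1, -, -⟩ := hasDerivAt_mode hM hsm hρ hρ' (tp p q) (xp p q) rfl rfl rfl
    refine h1.congr_deriv ?_
    have := (hpos ((q - p) / 2)).ne'
    simp only [modeT, modeX]
    field_simp
    ring
  · intro p q
    obtain ⟨-, h2, h3⟩ := hasDerivAt_mode hM hsm hρ hρ' (tq p q) (xq p q) rfl rfl rfl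
    refine ((h2.sub h3).div_const 2).congr_deriv ?_
    rw [reduced_equation hM hu (hρ _) rfl]
    simp only [modeV, modeW]
    ring
  · intro p q
    obtain ⟨-, h2, h3⟩ := hasDerivAt_mode hM hsm hρ hρ' (tp p q) (xp p q) rfl rfl rfl
    refine ((h2.add h3).div_const 2).congr_deriv ?_
    rw [reduced_equation hM hu (hρ _) rfl]
    simp only [modeV, modeW]
    ring
  · intro x
    have h0 := (hpos x).ne'
    have h1 := (((hρ' x).inv h0).const_mul (lam ^ 2)).add
      ((((hρ' x).pow 2).inv (pow_ne_zero 2 h0)).const_mul M)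
    refine h1.congr_deriv ?_
    simp only [modeV, Pi.pow_apply]
    field_simp
    ring
  · intro x
    have h0 := hpos x
    have h1 : 0 ≤ ρ x - 2 * M := by linarith [hρ x]
    unfold modeV
    positivity
  · intro x
    have h0 := hpos x
    unfold modeN
    positivity
  · intro x
    have h0 := (hρ x).le
    unfold modeN
    gcongr
  · have h1 := hlim.const_div_atTop (lam ^ 2)
    have h2 := ((tendsto_pow_atTop (two_ne_zero)).comp hlim).const_div_atTop M
    rw [← add_zero (0 : ℝ)]
    exact h1.add h2
  · intro q
    simp only [modeW]
    rw [neg_add_cancel, zero_div, hφ _ (hρ _), mul_zero]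

end Mode

/-- Corollary 5.5 (single mode): for data `(0, ψ)` with `ψ` smooth and compactly
supported in `(2M,∞)`, if the forward radiation field at null infinity vanishes for
`τ̄ ≤ −τ̄₀`, then `ψ` vanishes where `r_*(r) > τ̄₀`. -/
theorem support_corollary_null_infinity
    (M lam : ℝ) (hM : 0 < M) (hlam : 0 ≤ lam)
    (u : ℝ → ℝ → ℝ) (hu : IsModeSolution M lam u)
    (ψ : ℝ → ℝ) (hφ : ∀ r : ℝ, 2*M < r → u 0 r = 0) (hψ : ∀ r : ℝ, ψ r = pdt u 0 r)
    (hsupp : ∃ r₁ r₂ : ℝ, 2*M < r₁ ∧ r₁ ≤ r₂ ∧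
      ∀ r : ℝ, 2*M < r → r ∉ Set.Icc r₁ r₂ → ψ r = 0)
    (τ₀ : ℝ) (g : ℝ → ℝ)
    (hg : IsFwdRadInfty M u g) (hg0 : ∀ τ : ℝ, τ ≤ -τ₀ → g τ = 0) :
    ∀ r : ℝ, 2*M < r → τ₀ < rstar M r → ψ r = 0 := by
  obtain ⟨ρ, hρ, hinv, hinv', hmono, hρ'⟩ := exists_inverse_rstar hM
  have hsm : ContDiffOn ℝ ∞ (uncurry u) (exterior M) := hu.1
  have hρlim : Tendsto ρ atTop atTop := by
    refine tendsto_atTop_atTop_of_monotone hmono fun b => ?_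
    refine ⟨rstar M (max b (2 * M + 1)), ?_⟩
    rw [hinv' _ (lt_of_lt_of_le (by linarith) (le_max_right b (2 * M + 1)))]
    exact le_max_left _ _
  have hsys := mode_nullSystem hM hu hφ hρ hρ' hρlim
  set κ := lam ^ 2 / (2 * M) + M / (2 * M) ^ 2 with hκ
  -- On `t = 0` only the time derivative of `r u` survives.
  have hX : ∀ q, modeX M u ρ (-q) q = 0 := by
    intro q
    have hr : pdr u 0 (ρ q) = 0 := by
      have : (fun s => u 0 s) =ᶠ[nhds (ρ q)] fun _ => 0 := by
        filter_upwards [isOpen_Ioi.mem_nhds (hρ q)] with s hs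
        exact hφ s hs
      exact this.deriv_eq.trans (deriv_const _ _)
    have e : (q - -q) / 2 = q := by ring
    simp only [modeX]
    rw [e, neg_add_cancel, zero_div, hφ _ (hρ _), hr]
    ring
  have hT : ∀ q, modeT u ρ (-q) q = ρ q * ψ (ρ q) := by
    intro q
    have e : (q - -q) / 2 = q := by ring
    simp only [modeT]
    rw [e, neg_add_cancel, zero_div, hψ]
  obtain ⟨r₁, r₂, h1, h12, hs⟩ := hsupp
  have hout : ∀ x, x ∉ Icc (rstar M r₁) (rstar M r₂) → ψ (ρ x) = 0 := by
    intro x hx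
    refine hs _ (hρ x) fun hmem => hx ?_
    by_contra hne
    -- If `x` lies strictly outside, monotonicity of `ρ` forces `ρ x` to be an endpoint.
    rcases not_and_or.1 hne with h | h
    · have h3 := hmono (not_le.1 h).le
      rw [hinv' _ h1] at h3
      have : ρ x = r₁ := le_antisymm h3 hmem.1
      exact h (by rw [← this, hinv])
    · have h3 := hmono (not_le.1 h).le
      rw [hinv' _ (by linarith)] at h3
      have : ρ x = r₂ := le_antisymm hmem.2 h3
      exact h (by rw [← this, hinv])
  have hcont : Continuous fun x => ρ x * ψ (ρ x) * Real.exp (κ * x) := by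
    have h3 : Continuous fun x => ψ (ρ x) := by
      refine continuous_iff_continuousAt.2 fun x => ?_
      have := (hasDerivAt_comp_curve (smooth_pdt hsm) (hasDerivAt_const x (0:ℝ)) (hρ' x)
        (hρ x)).continuousAt
      simpa only [hψ] using this
    have hρc : Continuous ρ := continuous_iff_continuousAt.2 fun x => (hρ' x).continuousAt
    exact (hρc.mul h3).mul (by fun_prop)
  obtain ⟨K, hK⟩ := (isCompact_Icc (a := rstar M r₁)
    (b := rstar M r₂)).exists_bound_of_continuousOn hcont.continuousOn
  have hd : ∀ p, |(modeT u ρ p (-p) - modeX M u ρ p (-p)) / 2|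
      ≤ (max K 0) * Real.exp (κ * p) := by
    intro p
    have hX' := hX (-p)
    have hT' := hT (-p)
    rw [neg_neg] at hX' hT'
    rw [hX', hT', sub_zero]
    by_cases hp : -p ∈ Icc (rstar M r₁) (rstar M r₂)
    · have h3 := (hK _ hp).trans (le_max_left K 0)
      rw [mul_neg, Real.exp_neg, ← div_eq_mul_inv, norm_div, Real.norm_eq_abs, Real.norm_eq_abs,
        Real.abs_exp, div_le_iff₀ (Real.exp_pos _)] at h3
      rw [abs_div, abs_of_pos (by norm_num : (0:ℝ) < 2)]
      linarith [abs_nonneg (ρ (-p) * ψ (ρ (-p)))]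
    · rw [hout _ hp, mul_zero, zero_div, abs_zero]
      positivity
  have hA : ∀ᶠ q in atTop, (modeT u ρ (-q) q + modeX M u ρ (-q) q) / 2 = 0 := by
    filter_upwards [eventually_gt_atTop (rstar M r₂)] with q hq
    rw [hX, hT, hout q (fun h => absurd h.2 (not_le.2 hq))]
    simp
  have hrad : ∀ p ≤ -τ₀, Tendsto (fun q => (modeT u ρ p q + modeX M u ρ p q) / 2
      + (modeT u ρ p q - modeX M u ρ p q) / 2) atTop (nhds 0) := by
    intro p hp
    have hlin : Tendsto (fun q : ℝ => (q - p) / 2) atTop atTop :=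
      (tendsto_atTop_add_const_right atTop (-p) tendsto_id).atTop_div_const (by norm_num)
    have h3 := (hg p).comp (hρlim.comp hlin)
    rw [hg0 p hp] at h3
    refine h3.congr fun q => ?_
    simp only [comp_apply, modeT, hinv]
    rw [show p + (q - p) / 2 = (p + q) / 2 by ring]
    ring
  intro r hr hτ
  have h3 := hsys.data_eq_zero hd hA hrad (p := -rstar M r) (by linarith)
  simp only [neg_neg] at h3
  rw [hX, hT, hinv' r hr, sub_zero] at h3
  have hr0 : r ≠ 0 := by linarith
  simpa [hr0] using h3
end

section
/- Let ε > 0 and let u be a λ-mode solution whose initial data (φ,ψ) are smooth on (2M,∞) and vanish for r ≤ 2M + ε. Then u extends smoothly across the future event horizon: there exists U : ℝ × ℝ → ℝ that is infinitely differentiable on the closed half-plane ℝ × [0,∞) (in the sense of ContDiffOn, with all within-derivatives extending continuously up to the boundary {ρ = 0}) and satisfies U(τ,ρ) = u(τ − r_*(2M+ρ), 2M+ρ) for all τ ∈ ℝ and all ρ > 0. (Proposition 3.1, for a single spherical-harmonic mode: τ = t + r_*(r) and ρ = r − 2M are incoming Eddington–Finkelstein coordinates, in which {ρ = 0} is the future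 event horizon.) -/
/-!
Put `F(τ,ρ) = r · u(τ - r_*(r), r)` with `r = 2M + ρ`. In these incoming Eddington–Finkelstein
coordinates the mode equation becomes, on `ρ > 0`,
`2 ∂_τ∂_ρ F + f ∂²_ρ F + f' ∂_ρ F = W F`, where `f = ρ/(ρ+2M)` and
`W = λ²/(ρ+2M)² + 2M/(ρ+2M)³` (`modeSolution_PDE`). Its coefficients are smooth up to `ρ = 0` and
do not depend on `τ`, so every `∂_τ^i F` satisfies it too. Differentiating `j` times in `ρ` turns it
into a transport equation `(2 ∂_τ + f ∂_ρ + (j+1) f') ∂_ρ^(j+1) ∂_τ^i F = ∑_{k ≤ j} c_k ∂_ρ^k ∂_τ^i F`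
along the outgoing null curves `τ - 2 r_* = const` (`PDE.commuted`).

Followed backwards, such a curve moves towards smaller `ρ` and meets the initial slice `t = 0`,
i.e. `τ = r_*`, where all derivatives of `F` vanish for `ρ < ε` (`PDE.vanish`). Since `f' > 0`, a
source bounded by `C e^{Kτ}` yields a solution bounded by `C/(2K) e^{Kτ}` (`transport`). For `F`
itself one combines this estimate for `∂_ρ F` with integration in `ρ` at fixed `τ`, starting from
`t = 0` or from `ρ = δ`; for `K` large the resulting inequality for the weighted supremum closes
(`base_bound`). Induction on `j` then bounds every `∂_τ^i ∂_ρ^j F` near the horizon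
(`all_bound`). Finally, a function on the open half-plane all of whose derivatives are locally
bounded up to the boundary extends smoothly to the closed half-plane
(`JetFamily.contDiffOn_extend`), and `U` is the extension of `F` divided by `r`.
-/

open MeasureTheory Filter Set Function
open scoped ContDiff

open scoped Topology

/-! ### Families of partial derivatives on the half-plane -/

/-- `g i j` plays the role of `∂_τ^i ∂_ρ^j` of the function `g 0 0`: on the open half-plane `ρ > 0`
each `g i j` is differentiable, with partial derivatives `g (i+1) j` and `g i (j+1)`. No condition
is imposed where `ρ ≤ 0`. -/
def JetFamily (g : ℕ → ℕ → ℝ × ℝ → ℝ) : Prop :=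
  ∀ i j (p : ℝ × ℝ), 0 < p.2 → HasFDerivAt (g i j)
    (g (i+1) j p • ContinuousLinearMap.fst ℝ ℝ ℝ +
      g i (j+1) p • ContinuousLinearMap.snd ℝ ℝ ℝ) p

/-- The open half-plane `ρ > 0`, the image of the exterior `r > 2M`. -/
def HPlane : Set (ℝ × ℝ) := (univ : Set ℝ) ×ˢ Ioi (0:ℝ)

theorem isOpen_HPlane : IsOpen HPlane := isOpen_univ.prod isOpen_Ioi

theorem mem_HPlane {p : ℝ × ℝ} : p ∈ HPlane ↔ 0 < p.2 := by simp [HPlane]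

/-- The derivative of `h` in the direction `e`. -/
noncomputable def dirD (e : ℝ × ℝ) (h : ℝ × ℝ → ℝ) (p : ℝ × ℝ) : ℝ := fderiv ℝ h p e

theorem dirD_smooth (e : ℝ × ℝ) {h : ℝ × ℝ → ℝ} (hh : ContDiffOn ℝ ∞ h HPlane) :
    ContDiffOn ℝ ∞ (dirD e h) HPlane :=
  (hh.fderiv_of_isOpen isOpen_HPlane (m := ∞) (by simp)).clm_apply contDiffOn_const

theorem dirD_iter_smooth (e : ℝ × ℝ) {h : ℝ × ℝ → ℝ} (hh : ContDiffOn ℝ ∞ h HPlane) (n : ℕ) :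
    ContDiffOn ℝ ∞ ((dirD e)^[n] h) HPlane := by
  induction n with
  | zero => exact hh
  | succ n ih => rw [iterate_succ_apply']; exact dirD_smooth e ih

theorem dirD_comm (e e' : ℝ × ℝ) {h : ℝ × ℝ → ℝ} (hh : ContDiffOn ℝ ∞ h HPlane)
    {p : ℝ × ℝ} (hp : p ∈ HPlane) : dirD e (dirD e' h) p = dirD e' (dirD e h) p := by
  have hat : ContDiffAt ℝ ∞ h p := hh.contDiffAt (isOpen_HPlane.mem_nhds hp)
  have hs : IsSymmSndFDerivAt ℝ h p := hat.isSymmSndFDerivAt (by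
    rw [minSmoothness_of_isRCLikeNormedField]
    exact WithTop.coe_le_coe.2 le_top)
  have hd : DifferentiableAt ℝ (fderiv ℝ h) p :=
    (hat.fderiv_right (m := 1) (by norm_cast)).differentiableAt (by simp)
  have key : ∀ a b : ℝ × ℝ, dirD a (dirD b h) p = fderiv ℝ (fderiv ℝ h) p a b := by
    intro a b
    have := (hd.hasFDerivAt.clm_apply (hasFDerivAt_const b p)).fderiv
    change fderiv ℝ (fun q => fderiv ℝ h q b) p a = _
    rw [this]
    simp
  rw [key, key, hs.eq]

theorem dirD_congr (e : ℝ × ℝ) {h k : ℝ × ℝ → ℝ} (hk : ∀ p ∈ HPlane, h p = k p)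
    {p : ℝ × ℝ} (hp : p ∈ HPlane) : dirD e h p = dirD e k p := by
  have : h =ᶠ[𝓝 p] k := by
    filter_upwards [isOpen_HPlane.mem_nhds hp] with q hq using hk q hq
  simp [dirD, this.fderiv_eq]

/-- The iterated partial derivatives of a smooth function form a jet family; the point is that `∂_τ`
commutes with the iterated `∂_ρ`. -/
theorem exists_jetFamily {F : ℝ × ℝ → ℝ} (hF : ContDiffOn ℝ ∞ F HPlane) :
    ∃ g, JetFamily g ∧ g 0 0 = F := by
  refine ⟨fun i j => (dirD (0,1))^[j] ((dirD (1,0))^[i] F), ?_, rfl⟩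
  have hsm : ∀ i j, ContDiffOn ℝ ∞ ((dirD (0,1))^[j] ((dirD (1,0))^[i] F)) HPlane :=
    fun i j => dirD_iter_smooth _ (dirD_iter_smooth _ hF i) j
  have hτ : ∀ i j, ∀ p ∈ HPlane, dirD (1,0) ((dirD (0,1))^[j] ((dirD (1,0))^[i] F)) p =
      (dirD (0,1))^[j] ((dirD (1,0))^[i+1] F) p := by
    intro i j
    induction j with
    | zero => intro p _; simp only [iterate_zero, id, iterate_succ_apply']
    | succ j ih =>
      intro p hp
      rw [iterate_succ_apply', dirD_comm _ _ (hsm i j) hp, dirD_congr _ ih hp]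
      exact (iterate_succ_apply' (dirD (0,1)) j _ ▸ rfl)
  intro i j p hp
  have hp' := mem_HPlane.2 hp
  have hd := ((hsm i j).contDiffAt (isOpen_HPlane.mem_nhds hp')).differentiableAt (by simp)
  refine hd.hasFDerivAt.congr_fderiv ?_
  have e1 := hτ i j p hp'
  have e2 : dirD (0,1) ((dirD (0,1))^[j] ((dirD (1,0))^[i] F)) p =
      (dirD (0,1))^[j+1] ((dirD (1,0))^[i] F) p := by rw [iterate_succ_apply']
  simp only [dirD] at e1 e2
  change _ = (dirD (0,1))^[j] ((dirD (1,0))^[i+1] F) p • ContinuousLinearMap.fst ℝ ℝ ℝ +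
    (dirD (0,1))^[j+1] ((dirD (1,0))^[i] F) p • ContinuousLinearMap.snd ℝ ℝ ℝ
  rw [← e2, ← e1]
  ext <;> simp

/-! ### Smooth extension to the boundary -/

/-- The closed half-plane `ρ ≥ 0`; its boundary `ρ = 0` is the event horizon. -/
def HBar : Set (ℝ × ℝ) := (univ : Set ℝ) ×ˢ Ici (0:ℝ)

theorem closure_HPlane : closure HPlane = HBar := by
  simp [HPlane, HBar, closure_prod_eq]

/-- `h` is bounded on the part in `ρ > 0` of some neighbourhood of every boundary point `(a, 0)`. -/
def LocBdd (h : ℝ × ℝ → ℝ) : Prop :=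
  ∀ a : ℝ, ∃ C : ℝ, ∃ η > 0, ∀ p : ℝ × ℝ, |p.1 - a| < η → 0 < p.2 → p.2 < η → |h p| ≤ C

/-- Bounded first derivatives make `g i j` Lipschitz on a convex half-neighbourhood of a boundary
point, so that it is Cauchy there. -/
theorem JetFamily.exists_limit {g} (hg : JetFamily g) (hb : ∀ i j, LocBdd (g i j)) (i j : ℕ)
    {x : ℝ × ℝ} (hx : x ∈ HBar) : ∃ y, Tendsto (g i j) (𝓝[HPlane] x) (𝓝 y) := by
  rcases lt_or_eq_of_le (show 0 ≤ x.2 by simpa [HBar] using hx) with h0 | h0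
  · exact ⟨_, ((hg i j x h0).continuousAt.tendsto).mono_left nhdsWithin_le_nhds⟩
  obtain ⟨C1, η1, hη1, hC1⟩ := hb (i+1) j x.1
  obtain ⟨C2, η2, hη2, hC2⟩ := hb i (j+1) x.1
  set η := min η1 η2
  have hη : 0 < η := lt_min hη1 hη2
  set s : Set (ℝ × ℝ) := Metric.ball x.1 η ×ˢ Ioo 0 η
  have hsc : Convex ℝ s := (convex_ball _ _).prod (convex_Ioo _ _)
  have hlip : LipschitzOnWith (C1.toNNReal + C2.toNNReal) (g i j) s := by
    refine hsc.lipschitzOnWith_of_nnnorm_hasFDerivWithin_le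
      (fun p hp => (hg i j p hp.2.1).hasFDerivWithinAt) ?_
    intro p hp
    have a1 := hC1 p ((Metric.mem_ball.1 hp.1).trans_le (min_le_left _ _)) hp.2.1
      (hp.2.2.trans_le (min_le_left _ _))
    have a2 := hC2 p ((Metric.mem_ball.1 hp.1).trans_le (min_le_right _ _)) hp.2.1
      (hp.2.2.trans_le (min_le_right _ _))
    rw [← NNReal.coe_le_coe]
    push_cast
    refine (norm_add_le _ _).trans (add_le_add ?_ ?_)
    · rw [norm_smul]
      refine (mul_le_of_le_one_right (norm_nonneg _) (ContinuousLinearMap.norm_fst_le _ _ _)).trans ?_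
      exact a1.trans (Real.le_coe_toNNReal _)
    · rw [norm_smul]
      refine (mul_le_of_le_one_right (norm_nonneg _) (ContinuousLinearMap.norm_snd_le _ _ _)).trans ?_
      exact a2.trans (Real.le_coe_toNNReal _)
  have hmem : s ∈ 𝓝[HPlane] x := by
    have : (Metric.ball x.1 η ×ˢ Iio η) ∩ HPlane ⊆ s := by
      rintro p ⟨hp1, hp2⟩
      exact ⟨hp1.1, mem_HPlane.1 hp2, hp1.2⟩
    refine mem_of_superset (inter_mem (mem_nhdsWithin_of_mem_nhds ?_) self_mem_nhdsWithin) this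
    exact prod_mem_nhds (Metric.ball_mem_nhds _ hη) (Iio_mem_nhds (by rw [← h0]; exact hη))
  have hne : (𝓝[HPlane] x).NeBot := by
    rw [← mem_closure_iff_nhdsWithin_neBot, closure_HPlane]; exact hx
  have hcau : Cauchy (𝓝[HPlane] x) := cauchy_nhds.mono nhdsWithin_le_nhds
  obtain ⟨y, hy⟩ := CompleteSpace.complete
    (hcau.map_of_le hlip.uniformContinuousOn (le_principal_iff.2 hmem))
  exact ⟨y, hy⟩

/-- The continuous extensions of the `g i j` are again each other's partial derivatives, now within the
closed half-plane, because the derivative of a function extends whenever it has a limit. -/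
theorem JetFamily.contDiffOn_extend {g} (hg : JetFamily g) (hb : ∀ i j, LocBdd (g i j)) :
    ContDiffOn ℝ ∞ (extendFrom HPlane (g 0 0)) HBar := by
  set G : ℕ → ℕ → ℝ × ℝ → ℝ := fun i j => extendFrom HPlane (g i j)
  have hGc : ∀ i j, ContinuousOn (G i j) HBar := fun i j =>
    continuousOn_extendFrom closure_HPlane.ge (fun x hx => hg.exists_limit hb i j hx)
  have hGeq : ∀ i j, ∀ p ∈ HPlane, G i j p = g i j p := fun i j p hp =>
    extendFrom_eq (subset_closure hp)
      ((hg i j p (mem_HPlane.1 hp)).continuousAt.tendsto.mono_left nhdsWithin_le_nhds)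
  have hGlim : ∀ i j, ∀ x ∈ HBar, Tendsto (g i j) (𝓝[HPlane] x) (𝓝 (G i j x)) := fun i j x hx =>
    tendsto_extendFrom (hg.exists_limit hb i j hx)
  have hGd : ∀ i j, ∀ x ∈ HBar, HasFDerivWithinAt (G i j)
      (G (i+1) j x • ContinuousLinearMap.fst ℝ ℝ ℝ +
      G i (j+1) x • ContinuousLinearMap.snd ℝ ℝ ℝ) HBar x := by
    intro i j x hx
    have hev : ∀ p ∈ HPlane, HasFDerivAt (G i j) (g (i+1) j p • ContinuousLinearMap.fst ℝ ℝ ℝ +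
      g i (j+1) p • ContinuousLinearMap.snd ℝ ℝ ℝ) p := by
      intro p hp
      refine (hg i j p (mem_HPlane.1 hp)).congr_of_eventuallyEq ?_
      filter_upwards [isOpen_HPlane.mem_nhds hp] with q hq using hGeq i j q hq
    rw [← closure_HPlane]
    apply hasFDerivWithinAt_closure_of_tendsto_fderiv
    · exact fun p hp => (hev p hp).differentiableAt.differentiableWithinAt
    · exact convex_univ.prod (convex_Ioi _)
    · exact isOpen_HPlane
    · intro y hy
      rw [closure_HPlane] at hy
      exact ((hGc i j) y hy).mono (subset_closure.trans closure_HPlane.le)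
    · have : Tendsto (fun p => g (i+1) j p • ContinuousLinearMap.fst ℝ ℝ ℝ +
        g i (j+1) p • ContinuousLinearMap.snd ℝ ℝ ℝ) (𝓝[HPlane] x) (𝓝 (G (i+1) j x • ContinuousLinearMap.fst ℝ ℝ ℝ +
        G i (j+1) x • ContinuousLinearMap.snd ℝ ℝ ℝ)) :=
        ((hGlim _ _ x hx).smul_const _).add ((hGlim _ _ x hx).smul_const _)
      refine this.congr' ?_
      filter_upwards [self_mem_nhdsWithin] with p hp using (hev p hp).fderiv.symm
  have hfin : ∀ n : ℕ, ∀ i j, ContDiffOn ℝ n (G i j) HBar := by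
    intro n
    induction n with
    | zero => intro i j; simpa using hGc i j
    | succ n ih =>
      intro i j x hx
      push_cast
      refine contDiffWithinAt_succ_iff_hasFDerivWithinAt' (by simp) |>.2
        ⟨HBar, by simpa [hx] using self_mem_nhdsWithin, subset_insert _ _, fun h => by simp at h, _,
          fun y hy => hGd i j y hy, ?_⟩
      exact ((ih _ _ x hx).smul contDiffWithinAt_const).add
        ((ih _ _ x hx).smul contDiffWithinAt_const)
  exact contDiffOn_infty.2 fun n => hfin n 0 0

/-! ### The transport estimate along outgoing null curves -/

/-- The tortoise coordinate as a function of `ρ = r - 2M`. The initial slice `t = 0` is the curve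
`τ = tort M ρ`. -/
noncomputable def tort (M ρ : ℝ) : ℝ := rstar M (2*M + ρ)

theorem tort_eq (M ρ : ℝ) : tort M ρ = 2*M + ρ + 2*M*Real.log ρ := by
  simp [tort, rstar]

theorem tort_hasDerivAt (M : ℝ) {ρ : ℝ} (hρ : 0 < ρ) :
    HasDerivAt (tort M) ((ρ + 2*M)/ρ) ρ := by
  have h := ((hasDerivAt_id ρ).const_add (2*M)).add ((Real.hasDerivAt_log hρ.ne').const_mul (2*M))
  have e : tort M = (fun x => 2*M + id x) + fun x => 2*M*Real.log x := by
    ext x; simp [tort_eq]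
  rw [e]
  refine h.congr_deriv ?_
  field_simp

theorem tort_mono {M : ℝ} (hM : 0 < M) {a b : ℝ} (ha : 0 < a) (hab : a ≤ b) :
    tort M a ≤ tort M b := by
  rw [tort_eq, tort_eq]
  have := Real.log_le_log ha hab
  have : 2*M*Real.log a ≤ 2*M*Real.log b := by gcongr
  linarith

theorem tort_lt {M : ℝ} (hM : 0 < M) {a b : ℝ} (_ha : 0 < a) (hb : 0 < b)
    (h : tort M a ≤ tort M b) : a ≤ b := by
  by_contra! hlt
  rw [tort_eq, tort_eq] at h
  have := Real.log_le_log hb hlt.le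
  have : 2*M*Real.log b ≤ 2*M*Real.log a := by gcongr
  linarith

theorem tort_continuousOn (M : ℝ) {a b : ℝ} (ha : 0 < a) : ContinuousOn (tort M) (Icc a b) :=
  fun _ hx => (tort_hasDerivAt M (ha.trans_le hx.1)).continuousAt.continuousWithinAt

theorem exists_tort_le {M : ℝ} (hM : 0 < M) (x : ℝ) {δ : ℝ} (hδ : 0 < δ) :
    ∃ a, 0 < a ∧ a ≤ δ ∧ tort M a ≤ x := by
  refine ⟨min δ (Real.exp ((x - 2*M - δ)/(2*M))), lt_min hδ (Real.exp_pos _), min_le_left _ _, ?_⟩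
  set a := min δ (Real.exp ((x - 2*M - δ)/(2*M)))
  have ha : 0 < a := lt_min hδ (Real.exp_pos _)
  have h1 : a ≤ δ := min_le_left _ _
  have h2 : Real.log a ≤ (x - 2*M - δ)/(2*M) := (Real.log_le_iff_le_exp ha).2 (min_le_right _ _)
  have h3 : 2*M*Real.log a ≤ x - 2*M - δ := by
    rw [le_div_iff₀ (by positivity)] at h2; linarith
  rw [tort_eq]; linarith

/-- The function `1 - 2M/r` in terms of `ρ`; it vanishes at the horizon `ρ = 0`. -/
noncomputable def lapse (M ρ : ℝ) : ℝ := ρ/(ρ + 2*M)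

/-- The derivative of `lapse`. -/
noncomputable def lapse' (M ρ : ℝ) : ℝ := 2*M/(ρ + 2*M)^2

theorem lapse_hasDerivAt {M ρ : ℝ} (h : 0 < ρ + 2*M) :
    HasDerivAt (lapse M) (lapse' M ρ) ρ := by
  have := (hasDerivAt_id ρ).div ((hasDerivAt_id ρ).add_const (2*M)) (by simpa using h.ne')
  refine this.congr_deriv ?_
  simp [lapse']

/-- The chain rule along a plane curve `y ↦ (a y, b y)`. -/
theorem path_hasDerivAt {z zτ zρ : ℝ × ℝ → ℝ}
    (hz : ∀ p : ℝ × ℝ, 0 < p.2 → HasFDerivAt z (zτ p • ContinuousLinearMap.fst ℝ ℝ ℝ +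
      zρ p • ContinuousLinearMap.snd ℝ ℝ ℝ) p) {a b : ℝ → ℝ} {a' b' x : ℝ} (ha : HasDerivAt a a' x)
    (hb : HasDerivAt b b' x) (hx : 0 < b x) :
    HasDerivAt (fun y => z (a y, b y)) (zτ (a x, b x) * a' + zρ (a x, b x) * b') x := by
  have := (hz (a x, b x) hx).comp_hasDerivAt x (ha.prodMk hb)
  refine this.congr_deriv ?_
  simp

/-- Weighted bound for the transport equation `2 ∂_τ z + f ∂_ρ z + (m+1) f' z = S` at `(τ₁, ρ₁)`,
when `z` vanishes on the slice `τ = tort M ρ` and `|S| ≤ C e^{Kτ}` on the outgoing curve through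
`(τ₁, ρ₁)`, between the slice and that point. Along the curve, parametrized by `ρ`, the product
`f^(m+1) z` has derivative `f^m S`, which is dominated by the derivative of
`C/(2K) f^(m+1) e^{Kτ}`. -/
theorem transport {M : ℝ} (hM : 0 < M) (m : ℕ) {z zτ zρ : ℝ × ℝ → ℝ}
    (hz : ∀ p : ℝ × ℝ, 0 < p.2 → HasFDerivAt z (zτ p • ContinuousLinearMap.fst ℝ ℝ ℝ +
      zρ p • ContinuousLinearMap.snd ℝ ℝ ℝ) p) {C K τ₁ ρ₁ : ℝ} (hC : 0 ≤ C) (hK : 0 < K)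
    (hρ₁ : 0 < ρ₁) (hτ₁ : tort M ρ₁ ≤ τ₁)
    (hz0 : ∀ ρ, 0 < ρ → ρ ≤ ρ₁ → z (tort M ρ, ρ) = 0)
    (hS : ∀ τ ρ, 0 < ρ → ρ ≤ ρ₁ → tort M ρ ≤ τ → τ - 2 * tort M ρ = τ₁ - 2 * tort M ρ₁ →
      |2 * zτ (τ, ρ) + lapse M ρ * zρ (τ, ρ) + (m+1) * lapse' M ρ * z (τ, ρ)|
        ≤ C * Real.exp (K * τ)) :
    |z (τ₁, ρ₁)| ≤ C/(2*K) * Real.exp (K * τ₁) := by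
  set s := τ₁ - 2 * tort M ρ₁ with hs
  -- the outgoing curve meets the initial slice at `ρ₀`, where `tort M ρ₀ = -s`
  obtain ⟨a, ha0, haρ, has⟩ := exists_tort_le hM (-s) hρ₁
  obtain ⟨ρ₀, hρ₀, hRρ₀⟩ : -s ∈ tort M '' Icc a ρ₁ :=
    intermediate_value_Icc haρ (tort_continuousOn M ha0) ⟨has, by linarith⟩
  have hρ₀0 : 0 < ρ₀ := ha0.trans_le hρ₀.1
  set T : ℝ → ℝ := fun ρ => s + 2 * tort M ρ with hT
  have hTd : ∀ ρ, 0 < ρ → HasDerivAt T (2 * ((ρ + 2*M)/ρ)) ρ := fun ρ hρ =>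
    ((tort_hasDerivAt M hρ).const_mul 2).const_add s
  set A : ℝ → ℝ := fun ρ => lapse M ρ ^ (m+1) * z (T ρ, ρ) with hA
  set B : ℝ → ℝ := fun ρ => lapse M ρ ^ (m+1) * (C/(2*K) * Real.exp (K * T ρ)) with hB
  have hlp : ∀ ρ, 0 < ρ → 0 < lapse M ρ := fun ρ hρ => by unfold lapse; positivity
  have hlp' : ∀ ρ, 0 < ρ → 0 < lapse' M ρ := fun ρ hρ => by unfold lapse'; positivity
  have hinv : ∀ ρ, 0 < ρ → lapse M ρ * ((ρ + 2*M)/ρ) = 1 := fun ρ hρ => by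
    unfold lapse; field_simp
  have hAd : ∀ ρ, 0 < ρ → HasDerivAt A (lapse M ρ ^ m *
      (2 * zτ (T ρ, ρ) + lapse M ρ * zρ (T ρ, ρ) + (m+1) * lapse' M ρ * z (T ρ, ρ))) ρ := by
    intro ρ hρ
    have h1 := (lapse_hasDerivAt (M := M) (ρ := ρ) (by positivity)).pow (m+1)
    have h2 := path_hasDerivAt hz (hTd ρ hρ) (hasDerivAt_id ρ) hρ
    refine (h1.mul h2).congr_deriv ?_
    have := hinv ρ hρ
    simp only [id, Nat.cast_add, Nat.cast_one, Nat.add_sub_cancel, Pi.pow_apply]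
    linear_combination (2 * lapse M ρ ^ m * zτ (T ρ, ρ)) * this
  have hBd : ∀ ρ, 0 < ρ → HasDerivAt B (lapse M ρ ^ m * (C * Real.exp (K * T ρ)
      + (m+1) * lapse' M ρ * (C/(2*K) * Real.exp (K * T ρ)))) ρ := by
    intro ρ hρ
    have h1 := (lapse_hasDerivAt (M := M) (ρ := ρ) (by positivity)).pow (m+1)
    have h2 := (((hTd ρ hρ).const_mul K).exp).const_mul (C/(2*K))
    refine (h1.mul h2).congr_deriv ?_
    have := hinv ρ hρ
    have hCK : C/(2*K) * (K * 2) = C := by field_simp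
    simp only [Nat.cast_add, Nat.cast_one, Nat.add_sub_cancel, Pi.pow_apply]
    linear_combination (lapse M ρ ^ m * Real.exp (K * T ρ) * (C/(2*K) * (K*2))) * this +
      lapse M ρ ^ m * Real.exp (K * T ρ) * hCK
  have hbd : ∀ ρ ∈ Icc ρ₀ ρ₁, |lapse M ρ ^ m *
      (2 * zτ (T ρ, ρ) + lapse M ρ * zρ (T ρ, ρ) + (m+1) * lapse' M ρ * z (T ρ, ρ))| ≤
      lapse M ρ ^ m * (C * Real.exp (K * T ρ)
      + (m+1) * lapse' M ρ * (C/(2*K) * Real.exp (K * T ρ))) := by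
    intro ρ hρ
    have h0 : 0 < ρ := hρ₀0.trans_le hρ.1
    have hl := hlp ρ h0
    have hl' := hlp' ρ h0
    rw [abs_mul, abs_of_pos (pow_pos hl m)]
    gcongr
    have := hS (T ρ) ρ h0 hρ.2 (by have := tort_mono hM hρ₀0 hρ.1; simp only [hT]; linarith)
      (by simp only [hT]; ring)
    refine this.trans (le_add_of_nonneg_right ?_)
    positivity
  have h0 : A ρ₀ = 0 := by
    simp only [hA, hT]
    rw [show s + 2 * tort M ρ₀ = tort M ρ₀ by linarith, hz0 _ hρ₀0 hρ₀.2, mul_zero]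
  have hB0 : 0 ≤ B ρ₀ := by
    have := hlp ρ₀ hρ₀0
    simp only [hB]; positivity
  have mono : ∀ σ : ℝ, |σ| = 1 → MonotoneOn (fun ρ => B ρ - σ * A ρ) (Icc ρ₀ ρ₁) := by
    intro σ hσ
    have hd := fun (ρ : ℝ) (hρ : 0 < ρ) => (hBd ρ hρ).sub ((hAd ρ hρ).const_mul σ)
    refine monotoneOn_of_deriv_nonneg (convex_Icc _ _)
      (fun ρ hρ => (hd ρ (hρ₀0.trans_le hρ.1)).continuousAt.continuousWithinAt)
      (fun ρ hρ => ?_) (fun ρ hρ => ?_)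
    · rw [interior_Icc] at hρ
      exact (hd ρ (hρ₀0.trans hρ.1)).differentiableAt.differentiableWithinAt
    · rw [interior_Icc] at hρ
      have e := (hd ρ (hρ₀0.trans hρ.1)).deriv
      change 0 ≤ deriv (B - fun ρ => σ * A ρ) ρ
      rw [e, sub_nonneg]
      refine (le_abs_self _).trans ?_
      rw [abs_mul, hσ, one_mul]
      exact hbd ρ ⟨hρ.1.le, hρ.2.le⟩
  have hend : ∀ σ : ℝ, |σ| = 1 → σ * A ρ₁ ≤ B ρ₁ := by
    intro σ hσ
    have := mono σ hσ ⟨le_rfl, hρ₀.2⟩ ⟨hρ₀.2, le_rfl⟩ hρ₀.2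
    simp only [h0, mul_zero] at this
    linarith
  have hfin : |A ρ₁| ≤ B ρ₁ := abs_le.2 ⟨by linarith [hend (-1) (by simp)], by
    linarith [hend 1 (by simp)]⟩
  have hT1 : T ρ₁ = τ₁ := by simp only [hT, hs]; ring
  simp only [hA, hB, hT1] at hfin
  have hp := pow_pos (hlp ρ₁ hρ₁) (m+1)
  rw [abs_mul, abs_of_pos hp] at hfin
  exact le_of_mul_le_mul_left hfin hp

/-! ### The wave equation in Eddington–Finkelstein coordinates -/

/-- Every `τ`-derivative `v = g i 0` satisfies `2 ∂_τ∂_ρ v + f ∂²_ρ v + f' ∂_ρ v = W v` on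
`ρ > 0`. -/
def PDE (M : ℝ) (W : ℝ → ℝ) (g : ℕ → ℕ → ℝ × ℝ → ℝ) : Prop :=
  ∀ i (p : ℝ × ℝ), 0 < p.2 → 2 * g (i+1) 1 p + lapse M p.2 * g i 2 p + lapse' M p.2 * g i 1 p
    = W p.2 * g i 0 p

/-- The bound for the `τ`-derivatives of the solution. The weight exponent `K = δ · CW + 1` is
chosen so that the factor `δ · CW / (2K)` in the final inequality is at most `1/2`. -/
theorem base_bound {M : ℝ} (hM : 0 < M) {W : ℝ → ℝ} {g} (hg : JetFamily g) (hP : PDE M W g)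
    {δ CW : ℝ} (hδ : 0 < δ) (hCW : 0 ≤ CW) (hW : ∀ ρ, 0 < ρ → ρ ≤ δ → |W ρ| ≤ CW)
    (h0 : ∀ i j ρ, 0 < ρ → ρ ≤ δ → g i j (tort M ρ, ρ) = 0) (T : ℝ) (i : ℕ) :
    ∃ C, 0 ≤ C ∧ ∀ τ ρ, 0 < ρ → ρ ≤ δ → tort M ρ ≤ τ → τ ≤ T →
      |g i 0 (τ, ρ)| ≤ C * Real.exp ((δ * CW + 1) * τ) := by
  set K := δ * CW + 1 with hKdef
  have hK : 0 < K := by positivity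
  have hcont : ∀ p : ℝ × ℝ, 0 < p.2 → ContinuousAt (fun p : ℝ × ℝ => g i 0 p * Real.exp (-(K * p.1))) p :=
    fun p hp => (hg i 0 p hp).continuousAt.mul (by fun_prop)
  obtain ⟨B, hB⟩ := (isCompact_Icc.prod isCompact_singleton :
      IsCompact (Icc (tort M δ) T ×ˢ {δ})).exists_bound_of_continuousOn
      (f := fun p : ℝ × ℝ => g i 0 p * Real.exp (-(K * p.1)))
      (fun p hp => (hcont p (by rw [show p.2 = δ from hp.2]; exact hδ)).continuousWithinAt)
  set B' := max B 0
  have hB'0 : 0 ≤ B' := le_max_right _ _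
  have conv : ∀ (N : ℝ) (p : ℝ × ℝ), ‖g i 0 p * Real.exp (-(K * p.1))‖ ≤ N ↔
      |g i 0 p| ≤ N * Real.exp (K * p.1) := by
    intro N p
    rw [Real.norm_eq_abs, abs_mul, abs_of_pos (Real.exp_pos _), Real.exp_neg, ← div_eq_mul_inv,
      div_le_iff₀ (Real.exp_pos _)]
  refine ⟨2 * B', by positivity, ?_⟩
  intro τ₁ ρ₁ hρ₁ hρ₁δ hτ₁ hτ₁T
  set s := τ₁ - 2 * tort M ρ₁ with hs
  obtain ⟨a, ha0, haδ, has⟩ := exists_tort_le hM (-s) hδ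
  -- Cutting off at `τ - 2 r_* ≤ s` keeps `Ω` in a compact subset of `ρ > 0`, so the supremum `N`
  -- below is finite, while the bound obtained for it is independent of `s`. The set `Ω` is
  -- preserved both by moving back along outgoing curves and by increasing `ρ` up to `t = 0`
  -- or `ρ = δ`.
  set Ω : Set (ℝ × ℝ) := {p | 0 < p.2 ∧ p.2 ≤ δ ∧ tort M p.2 ≤ p.1 ∧ p.1 ≤ T ∧
    p.1 - 2 * tort M p.2 ≤ s} with hΩ
  have hΩa : Ω ⊆ Icc (tort M a) T ×ˢ Icc a δ := by
    rintro p ⟨hp1, hp2, hp3, hp4, hp5⟩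
    have hap : a ≤ p.2 := tort_lt hM ha0 hp1 (by linarith)
    exact ⟨⟨(tort_mono hM ha0 hap).trans hp3, hp4⟩, hap, hp2⟩
  obtain ⟨N0, hN0⟩ := (isCompact_Icc.prod isCompact_Icc :
      IsCompact (Icc (tort M a) T ×ˢ Icc a δ)).exists_bound_of_continuousOn
      (f := fun p : ℝ × ℝ => g i 0 p * Real.exp (-(K * p.1)))
      (fun p hp => (hcont p (ha0.trans_le hp.2.1)).continuousWithinAt)
  set V : Set ℝ := (fun p : ℝ × ℝ => ‖g i 0 p * Real.exp (-(K * p.1))‖) '' Ω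
  have hmem : (τ₁, ρ₁) ∈ Ω := ⟨hρ₁, hρ₁δ, hτ₁, hτ₁T, le_rfl⟩
  have hVne : V.Nonempty := ⟨_, mem_image_of_mem _ hmem⟩
  have hVb : BddAbove V := ⟨N0, by rintro _ ⟨p, hp, rfl⟩; exact hN0 p (hΩa hp)⟩
  set N := sSup V
  have hN : ∀ p ∈ Ω, |g i 0 p| ≤ N * Real.exp (K * p.1) := fun p hp =>
    (conv N p).1 (le_csSup hVb (mem_image_of_mem _ hp))
  have hNpos : 0 ≤ N := (norm_nonneg _).trans (le_csSup hVb (mem_image_of_mem _ hmem))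
  have h1 : ∀ p ∈ Ω, |g i 1 p| ≤ (CW * N)/(2*K) * Real.exp (K * p.1) := by
    rintro ⟨τ, ρ⟩ ⟨hp1, hp2, hp3, hp4, hp5⟩
    refine transport hM 0 (hg i 1) (by positivity) hK hp1 hp3
      (fun x hx hxρ => h0 i 1 x hx (hxρ.trans hp2)) ?_
    intro t x hx hxρ htx hts
    have e := hP i (t, x) hx
    simp only at hp1 hp2 hp3 hp4 hp5 e
    rw [Nat.cast_zero, zero_add, one_mul, e, abs_mul]
    have hxm := tort_mono hM hx hxρ
    have := hN (t, x) ⟨hx, hxρ.trans hp2, htx, by simp only; linarith, by simp only; linarith⟩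
    have := hW x hx (hxρ.trans hp2)
    calc |W x| * |g i 0 (t, x)| ≤ CW * (N * Real.exp (K * t)) := by gcongr
      _ = _ := by ring
  have hhalf : ∀ p ∈ Ω, |g i 0 p| ≤ (B' + N/2) * Real.exp (K * p.1) := by
    rintro ⟨τ, ρ⟩ ⟨hp1, hp2, hp3, hp4, hp5⟩
    simp only at hp1 hp2 hp3 hp4 hp5 ⊢
    -- at fixed `τ`, increase `ρ` until either `ρ = δ` or the initial slice is reached
    obtain ⟨ρ₂, hρ₂, hRρ₂, hval⟩ : ∃ ρ₂ ∈ Icc ρ δ, tort M ρ₂ ≤ τ ∧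
        |g i 0 (τ, ρ₂)| ≤ B' * Real.exp (K * τ) := by
      by_cases hc : tort M δ ≤ τ
      · refine ⟨δ, ⟨hp2, le_rfl⟩, hc, ?_⟩
        exact (conv B' (τ, δ)).1 ((hB (τ, δ) ⟨⟨hc, hp4⟩, rfl⟩).trans (le_max_left _ _))
      · obtain ⟨ρ₂, hρ₂, e⟩ : τ ∈ tort M '' Icc ρ δ :=
          intermediate_value_Icc hp2 (tort_continuousOn M hp1) ⟨hp3, (not_le.1 hc).le⟩
        refine ⟨ρ₂, hρ₂, e.le, ?_⟩
        have := h0 i 0 ρ₂ (hp1.trans_le hρ₂.1) hρ₂.2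
        rw [← e, this, abs_zero]; positivity
    have hmv := (convex_Icc ρ ρ₂).norm_image_sub_le_of_norm_hasDerivWithin_le
      (f := fun x => g i 0 (τ, x)) (f' := fun x => g i 1 (τ, x))
      (C := (CW * N)/(2*K) * Real.exp (K * τ)) (x := ρ₂) (y := ρ)
      (fun x hx => by
        have := path_hasDerivAt (hg i 0) (hasDerivAt_const x τ) (hasDerivAt_id x)
          (hp1.trans_le hx.1)
        simpa using this.hasDerivWithinAt)
      (fun x hx => by
        have hx0 := hp1.trans_le hx.1
        have m1 := tort_mono hM hp1 hx.1
        have m2 := tort_mono hM hx0 hx.2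
        exact h1 (τ, x) ⟨hx0, hx.2.trans hρ₂.2, by simp only; linarith, hp4,
          by simp only; linarith⟩)
      ⟨hρ₂.1, le_rfl⟩ ⟨le_rfl, hρ₂.1⟩
    simp only [Real.norm_eq_abs] at hmv
    have hdist : |ρ - ρ₂| ≤ δ := by
      rw [abs_le]; constructor <;> linarith [hρ₂.1, hρ₂.2]
    have hcoef : (CW * N)/(2*K) * δ ≤ N/2 := by
      rw [div_mul_eq_mul_div, div_le_div_iff₀ (by positivity) (by norm_num)]
      rw [hKdef]; nlinarith
    have habs : |g i 0 (τ, ρ)| ≤ |g i 0 (τ, ρ₂)| + |g i 0 (τ, ρ) - g i 0 (τ, ρ₂)| := by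
      have := abs_add_le (g i 0 (τ, ρ₂)) (g i 0 (τ, ρ) - g i 0 (τ, ρ₂))
      simpa using this
    calc |g i 0 (τ, ρ)| ≤ B' * Real.exp (K * τ) + (CW * N)/(2*K) * Real.exp (K * τ) * δ := by
          refine habs.trans (add_le_add hval (hmv.trans ?_))
          gcongr
      _ = (B' + (CW * N)/(2*K) * δ) * Real.exp (K * τ) := by ring
      _ ≤ (B' + N/2) * Real.exp (K * τ) := by gcongr
  have hle : N ≤ B' + N/2 := by
    refine csSup_le hVne ?_
    rintro _ ⟨p, hp, rfl⟩
    exact (conv _ p).2 (hhalf p hp)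
  refine (hN _ hmem).trans ?_
  have : N ≤ 2 * B' := by linarith
  gcongr

/-- The equation differentiated `j` times in `ρ`. Each differentiation of `f ∂_ρ` adds one more
`f'` to the coefficient of the top-order term; everything else is of lower order in `ρ`. -/
theorem PDE.commuted {M : ℝ} {W : ℝ → ℝ} {g} (hM : 0 < M) (hg : JetFamily g) (hP : PDE M W g)
    (hW : ContDiffOn ℝ ∞ W (Ioi (-(2*M)))) (j : ℕ) :
    ∃ c : ℕ → ℝ → ℝ, (∀ k, ContDiffOn ℝ ∞ (c k) (Ioi (-(2*M)))) ∧
      ∀ i (p : ℝ × ℝ), 0 < p.2 → 2 * g (i+1) (j+1) p + lapse M p.2 * g i (j+2) p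
        + (j+1) * lapse' M p.2 * g i (j+1) p = ∑ k ∈ Finset.range (j+1), c k p.2 * g i k p := by
  have hl' : ContDiffOn ℝ ∞ (lapse' M) (Ioi (-(2*M))) := by
    refine contDiffOn_const.div (by fun_prop) ?_
    intro x hx
    have : 0 < x + 2*M := by linarith [mem_Ioi.1 hx]
    positivity
  have hder : ∀ {h : ℝ → ℝ}, ContDiffOn ℝ ∞ h (Ioi (-(2*M))) →
      ContDiffOn ℝ ∞ (deriv h) (Ioi (-(2*M))) := fun hh =>
    hh.deriv_of_isOpen isOpen_Ioi (by simp)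
  have hda : ∀ {h : ℝ → ℝ}, ContDiffOn ℝ ∞ h (Ioi (-(2*M))) → ∀ x, 0 < x →
      HasDerivAt h (deriv h x) x := fun hh x hx =>
    ((hh.contDiffAt (Ioi_mem_nhds (by linarith))).differentiableAt (by simp)).hasDerivAt
  induction j with
  | zero =>
    refine ⟨fun _ => W, fun _ => hW, fun i p hp => ?_⟩
    simpa using hP i p hp
  | succ j ih =>
    obtain ⟨c, hc, hE⟩ := ih
    refine ⟨fun k x => (if k < j+1 then deriv (c k) x else -(j+1) * deriv (lapse' M) x) +
      (match k with | 0 => 0 | k+1 => c k x), ?_, ?_⟩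
    · intro k
      refine ContDiffOn.add ?_ ?_
      · by_cases hk : k < j+1
        · simpa only [hk, if_true] using hder (hc k)
        · simpa only [hk, if_false] using contDiffOn_const.mul (hder hl')
      · cases k with
        | zero => exact contDiffOn_const
        | succ k => exact hc k
    · rintro i ⟨τ, ρ⟩ hp
      simp only at hp ⊢
      have dg : ∀ i k, HasDerivAt (fun x => g i k (τ, x)) (g i (k+1) (τ, ρ)) ρ := fun i k => by
        simpa using path_hasDerivAt (hg i k) (hasDerivAt_const ρ τ) (hasDerivAt_id ρ) hp
      have dL := (((dg (i+1) (j+1)).const_mul 2).add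
        ((lapse_hasDerivAt (M := M) (ρ := ρ) (by linarith)).mul (dg i (j+2)))).add
        (((hda hl' ρ hp).const_mul ((j:ℝ)+1)).mul (dg i (j+1)))
      have dR : HasDerivAt (fun x => ∑ k ∈ Finset.range (j+1), c k x * g i k (τ, x))
          (∑ k ∈ Finset.range (j+1), (deriv (c k) ρ * g i k (τ, ρ) + c k ρ * g i (k+1) (τ, ρ))) ρ :=
        HasDerivAt.fun_sum fun k _ => (hda (hc k) ρ hp).mul (dg i k)
      have e := dL.unique (dR.congr_of_eventuallyEq (by
        filter_upwards [Ioi_mem_nhds hp] with x hx using hE i (τ, x) hx))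
      simp only [add_mul _ _ (g _ _ _)]
      rw [Finset.sum_add_distrib, Finset.sum_range_succ, Finset.sum_range_succ' _ (j+1)]
      rw [Finset.sum_add_distrib] at e
      have e2 : ∑ k ∈ Finset.range (j+1), (if k < j+1 then deriv (c k) ρ else
          -(j+1) * deriv (lapse' M) ρ) * g i k (τ, ρ) =
          ∑ k ∈ Finset.range (j+1), deriv (c k) ρ * g i k (τ, ρ) :=
        Finset.sum_congr rfl fun k hk => by rw [if_pos (Finset.mem_range.1 hk)]
      rw [e2]
      simp only [lt_irrefl, if_false]
      push_cast
      linear_combination e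

/-- The coefficients do not depend on `τ`, so the equation passes to `τ`-derivatives. -/
theorem PDE.of_zero {M : ℝ} {W : ℝ → ℝ} {g} (hg : JetFamily g)
    (h : ∀ p : ℝ × ℝ, 0 < p.2 → 2 * g 1 1 p + lapse M p.2 * g 0 2 p + lapse' M p.2 * g 0 1 p
      = W p.2 * g 0 0 p) : PDE M W g := by
  intro i
  induction i with
  | zero => exact h
  | succ i ih =>
    rintro ⟨τ, ρ⟩ hp
    have dg : ∀ i k, HasDerivAt (fun x => g i k (x, ρ)) (g (i+1) k (τ, ρ)) τ := fun i k => by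
      simpa using path_hasDerivAt (hg i k) (hasDerivAt_id τ) (hasDerivAt_const τ ρ) hp
    have dL := (((dg (i+1) 1).const_mul 2).add ((dg i 2).const_mul (lapse M ρ))).add
      ((dg i 1).const_mul (lapse' M ρ))
    have dR := (dg i 0).const_mul (W ρ)
    exact dL.unique (dR.congr_of_eventuallyEq (Eventually.of_forall fun x => ih (x, ρ) hp))

/-- Vanishing Cauchy data on the slice `τ = tort M ρ` force all derivatives to vanish there. Tangential
differentiation expresses `ρ`-derivatives through `τ`-derivatives, and the equation, for which the
slice is not characteristic, gives the next `τ`-derivative. -/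
theorem PDE.vanish {M ε : ℝ} (hM : 0 < M) {W : ℝ → ℝ} {g} (hg : JetFamily g) (hP : PDE M W g)
    (h0 : ∀ ρ, 0 < ρ → ρ < ε → g 0 0 (tort M ρ, ρ) = 0)
    (h1 : ∀ ρ, 0 < ρ → ρ < ε → g 1 0 (tort M ρ, ρ) = 0) :
    ∀ j i ρ, 0 < ρ → ρ < ε → g i j (tort M ρ, ρ) = 0 := by
  have along : ∀ i j, (∀ ρ, 0 < ρ → ρ < ε → g i j (tort M ρ, ρ) = 0) → ∀ ρ, 0 < ρ → ρ < ε →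
      g (i+1) j (tort M ρ, ρ) * ((ρ + 2*M)/ρ) + g i (j+1) (tort M ρ, ρ) = 0 := by
    intro i j h ρ hρ hρε
    have d := path_hasDerivAt (hg i j) (tort_hasDerivAt M hρ) (hasDerivAt_id ρ) hρ
    have d0 : HasDerivAt (fun _ : ℝ => (0:ℝ)) 0 ρ := hasDerivAt_const _ _
    have := d.unique (d0.congr_of_eventuallyEq (by
      filter_upwards [Ioo_mem_nhds hρ hρε] with x hx using h x hx.1 hx.2))
    simpa using this
  have hj0 : ∀ i, (∀ ρ, 0 < ρ → ρ < ε → g i 0 (tort M ρ, ρ) = 0) ∧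
      (∀ ρ, 0 < ρ → ρ < ε → g (i+1) 0 (tort M ρ, ρ) = 0) := by
    intro i
    induction i with
    | zero => exact ⟨h0, h1⟩
    | succ i ih =>
      refine ⟨ih.2, ?_⟩
      have hz : ∀ ρ, 0 < ρ → ρ < ε → g i 1 (tort M ρ, ρ) = 0 := fun ρ a b => by
        have := along i 0 ih.1 ρ a b
        rwa [ih.2 ρ a b, zero_mul, zero_add] at this
      intro ρ a b
      have e1 := along (i+1) 0 ih.2 ρ a b
      have e2 := along i 1 hz ρ a b
      have e3 := hP i (tort M ρ, ρ) a
      simp only [hz ρ a b, ih.1 ρ a b, lapse, mul_zero, add_zero] at e3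
      have hne : ρ + 2*M ≠ 0 := by positivity
      simp only [zero_add] at e1
      have e4 : g (i+1) 1 (tort M ρ, ρ) = 0 := by
        have : ρ/(ρ + 2*M) * g i 2 (tort M ρ, ρ) = - g (i+1) 1 (tort M ρ, ρ) := by
          have : g i 2 (tort M ρ, ρ) = -(g (i+1) 1 (tort M ρ, ρ) * ((ρ + 2*M)/ρ)) := by
            linear_combination e2
          rw [this]; field_simp
        linarith
      rw [e4, add_zero] at e1
      exact (mul_eq_zero.1 e1).resolve_right (by positivity)
  intro j
  induction j with
  | zero => exact fun i => (hj0 i).1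
  | succ j ih =>
    intro i ρ a b
    have := along i j (ih i) ρ a b
    rwa [ih (i+1) ρ a b, zero_mul, zero_add] at this

/-! ### Bounds for all derivatives near the horizon -/

theorem all_bound {M : ℝ} (hM : 0 < M) {W : ℝ → ℝ} {g} (hg : JetFamily g) (hP : PDE M W g)
    (hW : ContDiffOn ℝ ∞ W (Ioi (-(2*M)))) {δ : ℝ} (hδ : 0 < δ)
    (h0 : ∀ i j ρ, 0 < ρ → ρ ≤ δ → g i j (tort M ρ, ρ) = 0) (T : ℝ) :
    ∃ K, 0 < K ∧ ∀ j i, ∃ C, 0 ≤ C ∧ ∀ τ ρ, 0 < ρ → ρ ≤ δ → tort M ρ ≤ τ → τ ≤ T →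
      |g i j (τ, ρ)| ≤ C * Real.exp (K * τ) := by
  have bdd : ∀ {h : ℝ → ℝ}, ContDiffOn ℝ ∞ h (Ioi (-(2*M))) →
      ∃ B, 0 ≤ B ∧ ∀ ρ, 0 < ρ → ρ ≤ δ → |h ρ| ≤ B := by
    intro h hh
    obtain ⟨B, hB⟩ := (isCompact_Icc : IsCompact (Icc 0 δ)).exists_bound_of_continuousOn
      (hh.continuousOn.mono fun x hx => mem_Ioi.2 (by linarith [hx.1]))
    exact ⟨max B 0, le_max_right _ _, fun ρ a b => (hB ρ ⟨a.le, b⟩).trans (le_max_left _ _)⟩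
  obtain ⟨CW, hCW, hCWb⟩ := bdd hW
  have hK : 0 < δ * CW + 1 := by positivity
  refine ⟨δ * CW + 1, hK, ?_⟩
  set K := δ * CW + 1
  intro n
  induction n using Nat.strong_induction_on with
  | _ n ih =>
    cases n with
    | zero => exact base_bound hM hg hP hδ hCW hCWb h0 T
    | succ j =>
      intro i
      obtain ⟨c, hc, hE⟩ := hP.commuted hM hg hW j
      choose B hB0 hB using fun k => bdd (hc k)
      have ih' : ∀ k, ∃ C, 0 ≤ C ∧ (k < j+1 → ∀ τ ρ, 0 < ρ → ρ ≤ δ → tort M ρ ≤ τ → τ ≤ T →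
          |g i k (τ, ρ)| ≤ C * Real.exp (K * τ)) := by
        intro k
        by_cases hk : k < j+1
        · obtain ⟨C, h1, h2⟩ := ih k hk i
          exact ⟨C, h1, fun _ => h2⟩
        · exact ⟨0, le_rfl, fun h => absurd h hk⟩
      choose D hD0 hD using ih'
      set S := ∑ k ∈ Finset.range (j+1), B k * D k
      have hS0 : 0 ≤ S := Finset.sum_nonneg fun k _ => mul_nonneg (hB0 k) (hD0 k)
      refine ⟨S/(2*K), by positivity, ?_⟩
      intro τ ρ hρ hρδ hRτ hτT
      refine transport hM j (hg i (j+1)) hS0 hK hρ hRτ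
        (fun x hx hxρ => h0 _ _ x hx (hxρ.trans hρδ)) ?_
      intro t x hx hxρ htx hts
      have e := hE i (t, x) hx
      simp only at e
      rw [e, Finset.sum_mul]
      refine (Finset.abs_sum_le_sum_abs _ _).trans (Finset.sum_le_sum fun k hk => ?_)
      rw [abs_mul, mul_assoc]
      have hxm := tort_mono hM hx hxρ
      have h1 := hB k x hx (hxρ.trans hρδ)
      have h2 := hD k (Finset.mem_range.1 hk) t x hx (hxρ.trans hρδ) htx (by linarith)
      exact mul_le_mul h1 h2 (abs_nonneg _) (hB0 k)

theorem all_locBdd {M : ℝ} (hM : 0 < M) {W : ℝ → ℝ} {g} (hg : JetFamily g) (hP : PDE M W g)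
    (hW : ContDiffOn ℝ ∞ W (Ioi (-(2*M)))) {δ : ℝ} (hδ : 0 < δ)
    (h0 : ∀ i j ρ, 0 < ρ → ρ ≤ δ → g i j (tort M ρ, ρ) = 0) (i j : ℕ) : LocBdd (g i j) := by
  intro a
  obtain ⟨K, hK, hb⟩ := all_bound hM hg hP hW hδ h0 (a+1)
  obtain ⟨C, hC0, hC⟩ := hb j i
  obtain ⟨b, hb0, hbδ, hba⟩ := exists_tort_le hM (a-1) hδ
  refine ⟨C * Real.exp (K * (a+1)), min 1 b, lt_min one_pos hb0, ?_⟩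
  rintro ⟨τ, ρ⟩ h1 h2 h3
  simp only at h1 h2 h3
  have h4 := abs_lt.1 (h1.trans_le (min_le_left _ _))
  have h5 := h3.trans_le (min_le_right _ _)
  have h6 := tort_mono hM h2 h5.le
  have hτ : τ ≤ a + 1 := by linarith
  refine (hC τ ρ h2 (h5.le.trans hbδ) (by linarith) hτ).trans ?_
  gcongr

/-! ### From the mode equation to the extension -/

/-- For the radiation field `r u` the mode equation takes the form `PDE`, and `∂_τ` is `∂_t` on the
slice `t = 0`. The equation is obtained by expressing `u` through the jets, in which its `t`- and
`r`-derivatives are one-variable chain rules. -/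
theorem modeSolution_PDE {M lam : ℝ} (hM : 0 < M) {u : ℝ → ℝ → ℝ} (hu : IsModeSolution M lam u)
    {g} (hg : JetFamily g)
    (hgu : g 0 0 = fun p => (2*M + p.2) * u (p.1 - tort M p.2) (2*M + p.2)) :
    PDE M (fun ρ => lam^2/(ρ + 2*M)^2 + 2*M/(ρ + 2*M)^3) g ∧
    ∀ ρ, 0 < ρ → g 1 0 (tort M ρ, ρ) = (2*M + ρ) * pdt u 0 (2*M + ρ) := by
  have hrep : ∀ t r, 2*M < r → u t r = g 0 0 (t + rstar M r, r - 2*M) / r := by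
    intro t r hr
    have hr0 : r ≠ 0 := by linarith
    have e : 2*M + (r - 2*M) = r := by ring
    simp only [hgu, tort, e, add_sub_cancel_right]
    field_simp
  have hrs : ∀ r, 2*M < r → HasDerivAt (rstar M) (r/(r-2*M)) r := by
    intro r hr
    have h := (tort_hasDerivAt M (ρ := r - 2*M) (by linarith)).comp r
      ((hasDerivAt_id r).sub_const (2*M))
    have e : tort M ∘ (fun x => id x - 2*M) = rstar M := by
      ext x; simp [tort]
    rw [e] at h
    refine h.congr_deriv ?_
    simp
  -- one-variable derivatives of the jets along the Schwarzschild coordinate lines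
  have ht : ∀ i j t r, 2*M < r → HasDerivAt (fun s => g i j (s + rstar M r, r - 2*M))
      (g (i+1) j (t + rstar M r, r - 2*M)) t := by
    intro i j t r hr
    have := path_hasDerivAt (hg i j) ((hasDerivAt_id t).add_const (rstar M r))
      (hasDerivAt_const t (r - 2*M)) (by simpa using hr)
    simpa using this
  have hr' : ∀ i j t r, 2*M < r → HasDerivAt (fun s => g i j (t + rstar M s, s - 2*M))
      (g (i+1) j (t + rstar M r, r - 2*M) * (r/(r-2*M)) +
        g i (j+1) (t + rstar M r, r - 2*M)) r := by
    intro i j t r hr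
    have := path_hasDerivAt (hg i j) ((hrs r hr).const_add t)
      ((hasDerivAt_id r).sub_const (2*M)) (by simpa using hr)
    simpa using this
  have ept : ∀ t r, 2*M < r → pdt u t r = g 1 0 (t + rstar M r, r - 2*M) / r := by
    intro t r hr
    refine HasDerivAt.deriv ?_
    exact ((ht 0 0 t r hr).div_const r).congr_of_eventuallyEq
      (Eventually.of_forall fun s => hrep s r hr)
  have eptt : ∀ t r, 2*M < r → pdtt u t r = g 2 0 (t + rstar M r, r - 2*M) / r := by
    intro t r hr
    refine HasDerivAt.deriv ?_
    exact ((ht 1 0 t r hr).div_const r).congr_of_eventuallyEq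
      (Eventually.of_forall fun s => ept s r hr)
  have epr : ∀ t r, 2*M < r → pdr u t r =
      ((g 1 0 (t + rstar M r, r - 2*M) * (r/(r-2*M)) + g 0 1 (t + rstar M r, r - 2*M)) * r
        - g 0 0 (t + rstar M r, r - 2*M)) / r^2 := by
    intro t r hr
    refine HasDerivAt.deriv ?_
    have hr0 : r ≠ 0 := by linarith
    have := ((hr' 0 0 t r hr).div (hasDerivAt_id r) hr0).congr_of_eventuallyEq (by
      filter_upwards [Ioi_mem_nhds hr] with s hs using hrep t s hs)
    simpa using this
  have eprr : ∀ t r, 2*M < r → pdrr u t r =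
      ((((g 2 0 (t + rstar M r, r - 2*M) * (r/(r-2*M)) + g 1 1 (t + rstar M r, r - 2*M)) *
          (r/(r-2*M)) + g 1 0 (t + rstar M r, r - 2*M) * (-(2*M)/(r-2*M)^2) +
        (g 1 1 (t + rstar M r, r - 2*M) * (r/(r-2*M)) + g 0 2 (t + rstar M r, r - 2*M))) * r) * r^2
        - ((g 1 0 (t + rstar M r, r - 2*M) * (r/(r-2*M)) + g 0 1 (t + rstar M r, r - 2*M)) * r
        - g 0 0 (t + rstar M r, r - 2*M)) * (2*r)) / (r^2)^2 := by
    intro t r hr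
    refine HasDerivAt.deriv ?_
    have hr0 : r ≠ 0 := by linarith
    have hr1 : r - 2*M ≠ 0 := by linarith
    have da : HasDerivAt (fun x => x/(x-2*M)) (-(2*M)/(r-2*M)^2) r := by
      refine ((hasDerivAt_id r).div ((hasDerivAt_id r).sub_const (2*M)) hr1).congr_deriv ?_
      simp
    have dsq : HasDerivAt (fun x : ℝ => x^2) (2*r) r := by simpa using hasDerivAt_pow 2 r
    have := (((((hr' 1 0 t r hr).mul da).add (hr' 0 1 t r hr)).mul (hasDerivAt_id' r)).sub
      (hr' 0 0 t r hr)).div dsq (pow_ne_zero 2 hr0)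
    refine (this.congr_of_eventuallyEq (by
      filter_upwards [Ioi_mem_nhds hr] with s hs using epr t s hs)).congr_deriv ?_
    simp only [Pi.mul_apply, Pi.add_apply, Pi.sub_apply]
    ring
  constructor
  · refine PDE.of_zero hg ?_
    rintro ⟨τ, ρ⟩ hρ
    simp only at hρ ⊢
    have hr : 2*M < ρ + 2*M := by linarith
    have e := hu.2 (τ - rstar M (ρ + 2*M)) (ρ + 2*M) hr
    rw [eptt _ _ hr, epr _ _ hr, eprr _ _ hr, hrep _ _ hr] at e
    simp only [sub_add_cancel, add_sub_cancel_right] at e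
    have h1 : ρ + 2*M ≠ 0 := by linarith
    have h2 : ρ ≠ 0 := hρ.ne'
    simp only [lapse, lapse']
    rw [← sub_eq_zero]
    refine Eq.trans ?_ (mul_eq_zero_of_right (ρ + 2*M) e)
    field_simp
    ring
  · intro ρ hρ
    have h := ept 0 (2*M + ρ) (by linarith)
    have h1 : 2*M + ρ ≠ 0 := by linarith
    rw [h]
    simp only [zero_add, add_sub_cancel_left, tort]
    field_simp

/-- Proposition 3.1 (single mode): for smooth data vanishing for `r ≤ 2M + ε`, the
solution extends smoothly across the future event horizon in the incoming
Eddington–Finkelstein coordinates `τ = t + r_*(r)`, `ρ = r − 2M`. -/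
theorem smooth_across_event_horizon
    (M lam ε : ℝ) (hM : 0 < M) (hlam : 0 ≤ lam) (hε : 0 < ε)
    (u : ℝ → ℝ → ℝ) (hu : IsModeSolution M lam u)
    (hφ : ∀ r : ℝ, 2*M < r → r ≤ 2*M + ε → u 0 r = 0)
    (hψ : ∀ r : ℝ, 2*M < r → r ≤ 2*M + ε → pdt u 0 r = 0) :
    ∃ U : ℝ → ℝ → ℝ,
      ContDiffOn ℝ ∞ (Function.uncurry U) ((Set.univ : Set ℝ) ×ˢ Set.Ici (0:ℝ)) ∧
      ∀ τ ρ : ℝ, 0 < ρ → U τ ρ = u (τ - rstar M (2*M + ρ)) (2*M + ρ) := by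
  set F : ℝ × ℝ → ℝ := fun p => (2*M + p.2) * u (p.1 - tort M p.2) (2*M + p.2) with hF
  have hFs : ContDiffOn ℝ ∞ F HPlane := by
    have ht : ContDiffOn ℝ ∞ (fun p : ℝ × ℝ => tort M p.2) HPlane := by
      simp only [tort_eq]
      refine ContDiffOn.add (by fun_prop) (contDiffOn_const.mul ?_)
      exact contDiffOn_snd.log fun p hp => (mem_HPlane.1 hp).ne'
    refine ContDiffOn.mul (by fun_prop) ?_
    refine hu.1.comp (f := fun p : ℝ × ℝ => (p.1 - tort M p.2, 2*M + p.2))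
      ((contDiffOn_fst.sub ht).prodMk (by fun_prop)) ?_
    intro p hp
    have := mem_HPlane.1 hp
    exact ⟨mem_univ _, mem_Ioi.2 (by simp only; linarith)⟩
  obtain ⟨g, hg, hg0⟩ := exists_jetFamily hFs
  obtain ⟨hP, hg1⟩ := modeSolution_PDE hM hu hg hg0
  have hvan := hP.vanish (ε := ε) hM hg
    (fun ρ a b => by
      rw [hg0]; simp only [hF, sub_self]
      rw [hφ _ (by linarith) (by linarith), mul_zero])
    (fun ρ a b => by rw [hg1 ρ a, hψ _ (by linarith) (by linarith), mul_zero])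
  have hW : ContDiffOn ℝ ∞ (fun ρ : ℝ => lam^2/(ρ + 2*M)^2 + 2*M/(ρ + 2*M)^3)
      (Ioi (-(2*M))) := by
    have hpos : ∀ x ∈ Ioi (-(2*M)), 0 < x + 2*M := fun x hx => by linarith [mem_Ioi.1 hx]
    exact (contDiffOn_const.div (by fun_prop) fun x hx => (pow_pos (hpos x hx) 2).ne').add
      (contDiffOn_const.div (by fun_prop) fun x hx => (pow_pos (hpos x hx) 3).ne')
  have hb := all_locBdd hM hg hP hW (half_pos hε)
    (fun i j ρ a b => hvan j i ρ a (by linarith))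
  refine ⟨fun τ ρ => extendFrom HPlane (g 0 0) (τ, ρ) / (2*M + ρ), ?_, ?_⟩
  · refine (hg.contDiffOn_extend hb).div (by fun_prop) ?_
    intro p hp
    have : 0 ≤ p.2 := hp.2
    positivity
  · intro τ ρ hρ
    have hp : (τ, ρ) ∈ HPlane := mem_HPlane.2 hρ
    have e : extendFrom HPlane (g 0 0) (τ, ρ) = g 0 0 (τ, ρ) := extendFrom_eq (subset_closure hp)
      ((hg 0 0 (τ, ρ) hρ).continuousAt.tendsto.mono_left nhdsWithin_le_nhds)
    simp only [e]
    simp only [hg0, hF, tort]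
    have : 2*M + ρ ≠ 0 := by positivity
    field_simp
end
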